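/- arXiv:2103.16691 — 4 statements merged into one kernel-verified Lean document; each statement's English description precedes it below -/
import Mathlib

section
/- The center Z(A) of the binary cubic generic Clifford algebra A is a free module of rank 2 over the subalgebra S = k[x³, y³, α, β, γ], with basis {1, δ³}. -/
noncomputable section

open FreeAlgebra

variable (k : Type*) [Field k]

/-- Relations of the binary cubic generic Clifford algebra. -/
inductive GCRel : FreeAlgebra k (Fin 2) → FreeAlgebra k (Fin 2) → Prop
  | rel1 : GCRel ((ι k 0) ^ 3 * ι k 1) (ι k 1 * (ι k 0) ^ 3)
  | rel2 : GCRel (ι k 0 * (ι k 1) ^ 3) ((ι k 1) ^ 3 * ι k 0)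
  | rel3 : GCRel ((ι k 0) ^ 2 * (ι k 1) ^ 2 + (ι k 0 * ι k 1) ^ 2)
      ((ι k 1) ^ 2 * (ι k 0) ^ 2 + (ι k 1 * ι k 0) ^ 2)

/-- The binary cubic generic Clifford algebra. -/
abbrev GCA := RingQuot (GCRel k)

/-- The generator x. -/
def gx : GCA k := RingQuot.mkAlgHom k (GCRel k) (ι k 0)

/-- The generator y. -/
def gy : GCA k := RingQuot.mkAlgHom k (GCRel k) (ι k 1)

/-- α = x²y + xyx + yx². -/
def gα : GCA k := gx k ^ 2 * gy k + gx k * gy k * gx k + gy k * gx k ^ 2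

/-- β = xy² + yxy + y²x. -/
def gβ : GCA k := gx k * gy k ^ 2 + gy k * gx k * gy k + gy k ^ 2 * gx k

/-- γ = (xy)² − y²x². -/
def gγ : GCA k := (gx k * gy k) ^ 2 - gy k ^ 2 * gx k ^ 2

/-- δ = yx − ω·xy. -/
def gδ (ω : k) : GCA k := gy k * gx k - algebraMap k (GCA k) ω * (gx k * gy k)

end

/-!
Let `R = k[x³, α, β, γ]`, a polynomial ring. Reordering products with the help of `δ` shows that
`A` is spanned over `R[y]`, acting on the right, by `1, δ, x, xδ, x², x²δ`; this spanning family is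
a basis because left multiplication by `x` and `y` in these coordinates defines matrices over `R[Y]`
which themselves satisfy the relations of `A`. The matrix of `y` is upper triangular with diagonal
`Y, ω²Y, ωY, ωY, ω²Y, Y`, and its `Y`-eigenvectors are spanned by the coordinates of `1` and `δ³`,
so the centralizer of `y` is `R[y] ⊕ R[y]δ³`. Finally `u = β + (ω² - 1)δy` satisfies `yu = ω²uy` and
commutes with `δ³`, so an element of this centralizer commutes with `u` only if its coefficients are
polynomials in `y³`.
-/

open Matrix Polynomial

universe u v

section CubicIdentities

variable {A : Type*} [Ring A] {x y : A}

/-- The polarization `x²y + xyx + yx²` of the cube: at the generators of the Clifford algebra,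
`cubePolar x y` is `α` and `cubePolar y x` is `β`. -/
def cubePolar (x y : A) : A := x ^ 2 * y + x * y * x + y * x ^ 2

theorem commute_cubePolar_left_iff : Commute (cubePolar x y) x ↔ Commute (x ^ 3) y := by
  have h : cubePolar x y * x - x * cubePolar x y = -(x ^ 3 * y - y * x ^ 3) := by
    rw [cubePolar]; noncomm_ring
  rw [commute_iff_eq, commute_iff_eq, ← sub_eq_zero, h, neg_eq_zero, sub_eq_zero]

theorem commute_cubePolar_right_iff :
    Commute (cubePolar x y) y ↔
      x ^ 2 * y ^ 2 + (x * y) ^ 2 = y ^ 2 * x ^ 2 + (y * x) ^ 2 := by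
  have h : cubePolar x y * y - y * cubePolar x y =
      x ^ 2 * y ^ 2 + (x * y) ^ 2 - (y ^ 2 * x ^ 2 + (y * x) ^ 2) := by
    rw [cubePolar]; noncomm_ring
  rw [commute_iff_eq, ← sub_eq_zero, h, sub_eq_zero]

/-- The expression `(xy)² - y²x²`, whose value at the generators of the Clifford algebra
is `γ`. -/
def sqCommutator (x y : A) : A := (x * y) ^ 2 - y ^ 2 * x ^ 2

theorem commute_sqCommutator_left (hx : Commute (x ^ 3) y)
    (hxy : x ^ 2 * y ^ 2 + (x * y) ^ 2 = y ^ 2 * x ^ 2 + (y * x) ^ 2) :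
    Commute (sqCommutator x y) x := by
  rw [commute_iff_eq, sqCommutator]
  linear_combination (norm := noncomm_ring) hx.eq * y + y * hx.eq - x * hxy

theorem commute_sqCommutator_right (hy : Commute (y ^ 3) x)
    (hxy : x ^ 2 * y ^ 2 + (x * y) ^ 2 = y ^ 2 * x ^ 2 + (y * x) ^ 2) :
    Commute (sqCommutator x y) y := by
  rw [commute_iff_eq, sqCommutator]
  linear_combination (norm := noncomm_ring) hxy * y + hy.eq * x + x * hy.eq

end CubicIdentities

section SkewCommutator

variable {R A : Type*} [CommRing R] [Ring A] [Algebra R A] {ω : R} {x y : A}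

/-- The `ω`-commutator of `y` and `x`, whose value at the generators of the Clifford algebra
is `δ`. -/
def skewCommutator (ω : R) (x y : A) : A := y * x - ω • (x * y)

theorem map_skewCommutator {B : Type*} [Ring B] [Algebra R B] (f : A →ₐ[R] B) (ω : R) (x y : A) :
    f (skewCommutator ω x y) = skewCommutator ω (f x) (f y) := by
  simp only [skewCommutator, map_sub, map_smul, map_mul]

theorem skewCommutator_algebraMap {S : Type*} [CommRing S] [Algebra R S] [Algebra S A]
    [IsScalarTower R S A] (ω : R) (x y : A) :
    skewCommutator (algebraMap R S ω) x y = skewCommutator ω x y := by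
  rw [skewCommutator, algebraMap_smul, skewCommutator]

theorem mul_eq_smul_add_skewCommutator (ω : R) (x y : A) :
    y * x = ω • (x * y) + skewCommutator ω x y :=
  (add_sub_cancel _ _).symm

theorem skewCommutator_mul (hω : ω ^ 2 + ω + 1 = 0) (x y : A) :
    skewCommutator ω x y * x = ω ^ 2 • (x * skewCommutator ω x y) + cubePolar x y := by
  simp only [skewCommutator, cubePolar, pow_two x, mul_sub, sub_mul, mul_smul_comm,
    smul_mul_assoc, mul_assoc]
  match_scalars <;> grind

theorem mul_skewCommutator (hω : ω ^ 2 + ω + 1 = 0) (x y : A) :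
    y * skewCommutator ω x y = ω ^ 2 • (skewCommutator ω x y * y) + cubePolar y x := by
  simp only [skewCommutator, cubePolar, pow_two y, mul_sub, sub_mul, mul_smul_comm,
    smul_mul_assoc, mul_assoc]
  match_scalars <;> grind

theorem skewCommutator_mul_self (hω : ω ^ 2 + ω + 1 = 0)
    (hxy : x ^ 2 * y ^ 2 + (x * y) ^ 2 = y ^ 2 * x ^ 2 + (y * x) ^ 2) :
    skewCommutator ω x y * skewCommutator ω x y = sqCommutator x y
      - (1 - ω) • (x * (skewCommutator ω x y * y))
      - ω • (cubePolar x y * y + cubePolar y x * x) := by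
  have h : (1 + ω) • (x ^ 2 * y ^ 2 + (x * y) ^ 2 - (y ^ 2 * x ^ 2 + (y * x) ^ 2)) = 0 := by
    rw [hxy, sub_self, smul_zero]
  rw [← sub_eq_zero, ← neg_eq_zero, ← h]
  simp only [skewCommutator, cubePolar, sqCommutator, pow_two x, pow_two y, pow_two (_ * _),
    mul_sub, sub_mul, add_mul, mul_smul_comm, smul_mul_assoc, mul_assoc]
  match_scalars <;> grind

theorem commute_pow_three_of_mul_eq {u v : A} {c : R} (hω : ω ^ 2 + ω + 1 = 0)
    (h : u * v = ω • (v * u) + algebraMap R A c) : Commute (u ^ 3) v := by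
  have h₂ : u * (u * v) = ω ^ 2 • (v * (u * u)) + (ω + 1) • (c • u) := by
    rw [h, mul_add, mul_smul_comm, ← mul_assoc, h, add_mul, Algebra.algebraMap_eq_smul_one]
    simp only [smul_mul_assoc, mul_smul_comm, mul_one, one_mul, mul_assoc]
    module
  have h₃ : u * (u * (u * v)) = v * (u * (u * u)) := by
    rw [h₂, mul_add, mul_smul_comm, ← mul_assoc u v, h, add_mul, Algebra.algebraMap_eq_smul_one]
    simp only [smul_mul_assoc, mul_smul_comm, one_mul, mul_assoc]
    match_scalars <;> grind
  rw [commute_iff_eq, pow_three, mul_assoc, mul_assoc, h₃]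

/-- The element `u = q + (ω² - 1)δy`, where `δ` is the `ω`-commutator of `y` and `x`. If `q` is the
value of `cubePolar y x`, then `y` commutes with it up to the factor `ω²`. -/
def twist (ω q : R) (x y : A) : A := algebraMap R A q + (ω ^ 2 - 1) • (skewCommutator ω x y * y)

theorem map_twist {B : Type*} [Ring B] [Algebra R B] (f : A →ₐ[R] B) (ω q : R) (x y : A) :
    f (twist ω q x y) = twist ω q (f x) (f y) := by
  simp only [twist, map_add, AlgHom.commutes, map_smul, map_mul, map_skewCommutator]

theorem twist_algebraMap {S : Type*} [CommRing S] [Algebra R S] [Algebra S A]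
    [IsScalarTower R S A] (ω q : R) (x y : A) :
    twist (algebraMap R S ω) (algebraMap R S q) x y = twist ω q x y := by
  rw [twist, skewCommutator_algebraMap, ← map_pow, ← map_one (algebraMap R S), ← map_sub,
    algebraMap_smul, ← IsScalarTower.algebraMap_apply, twist]

end SkewCommutator

section Polynomials

variable {R : Type*} [CommRing R]

theorem sq_add_self_add_one_eq_zero_of_isPrimitiveRoot [IsDomain R] {ω : R}
    (hω : IsPrimitiveRoot ω 3) : ω ^ 2 + ω + 1 = 0 := by
  simpa [cyclotomic_three] using hω.isRoot_cyclotomic three_pos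

theorem C_sq_add_C_add_one_eq_zero {ω : R} (hω : ω ^ 2 + ω + 1 = 0) :
    (C ω : R[X]) ^ 2 + C ω + 1 = 0 := by
  rw [← C_pow, ← C_add, ← C_1, ← C_add, hω, C_0]

theorem aeval_mulVec_of_mulVec_eq_X_smul {n : Type*} [Fintype n] [DecidableEq n]
    {M : Matrix n n R[X]} {v : n → R[X]} (h : M *ᵥ v = (X : R[X]) • v) (f : R[X]) :
    aeval M f *ᵥ v = f • v := by
  induction f using Polynomial.induction_on' with
  | add f₁ f₂ h₁ h₂ => rw [map_add, add_mulVec, h₁, h₂, add_smul]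
  | monomial i r =>
    induction i with
    | zero =>
      rw [monomial_zero_left, aeval_C, IsScalarTower.algebraMap_apply R R[X], algebraMap_eq,
        Algebra.algebraMap_eq_smul_one, smul_mulVec, one_mulVec]
    | succ i ih =>
      rw [← monomial_mul_X, map_mul, aeval_X, ← mulVec_mulVec, h, mulVec_smul, ih, smul_smul,
        mul_comm]

theorem aeval_mul_eq_mul_aeval_comp {A : Type*} [Ring A] [Algebra R A] {c : R} {u y : A}
    (h : y * u = c • (u * y)) (f : R[X]) : aeval y f * u = u * aeval y (f.comp (C c * X)) := by
  induction f using Polynomial.induction_on' with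
  | add f₁ f₂ h₁ h₂ => rw [map_add, add_comp, map_add, add_mul, mul_add, h₁, h₂]
  | monomial i r =>
    induction i with
    | zero => rw [monomial_zero_left, C_comp, aeval_C, Algebra.commutes]
    | succ i ih =>
      rw [← monomial_mul_X, map_mul, aeval_X, mul_assoc, h, mul_smul_comm, ← mul_assoc, ih,
        mul_comp, X_comp, map_mul, map_mul, aeval_C, aeval_X, mul_assoc, ← Algebra.smul_def,
        mul_smul_comm, mul_smul_comm]

theorem expand_contract_of_comp_C_mul_X_eq_self [IsDomain R] {n : ℕ} {ζ : R} (hn : n ≠ 0)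
    (hζ : IsPrimitiveRoot ζ n) {f : R[X]} (h : f.comp (C ζ * X) = f) :
    expand R n (contract n f) = f := by
  ext i
  rw [coeff_expand hn.bot_lt, coeff_contract hn]
  split_ifs with hi
  · rw [Nat.div_mul_cancel hi]
  · have hcoeff : f.coeff i * ζ ^ i = f.coeff i := by rw [← comp_C_mul_X_coeff, h]
    exact ((mul_right_eq_self₀.1 hcoeff).resolve_left (mt (hζ.pow_eq_one_iff_dvd i).1 hi)).symm

end Polynomials

/-- The pair `(x, y)` satisfies the relations of the generic Clifford algebra, with the central
elements `x³`, `α`, `β`, `γ` specialized to the scalars `a`, `p`, `q`, `g`. -/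
structure IsCliffordPair {R A : Type*} [CommRing R] [Ring A] [Algebra R A] (a p q g : R)
    (x y : A) : Prop where
  pow_three_eq : x ^ 3 = algebraMap R A a
  cubePolar_eq : cubePolar x y = algebraMap R A p
  cubePolar_swap_eq : cubePolar y x = algebraMap R A q
  sqCommutator_eq : sqCommutator x y = algebraMap R A g

namespace IsCliffordPair

variable {R A : Type*} [CommRing R] [Ring A] [Algebra R A] {ω a p q g : R} {x y : A}

theorem restrictScalars {S : Type*} [CommRing S] [Algebra R S] [Algebra S A] [IsScalarTower R S A]
    (h : IsCliffordPair (algebraMap R S a) (algebraMap R S p) (algebraMap R S q)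
      (algebraMap R S g) x y) :
    IsCliffordPair a p q g x y where
  pow_three_eq := by rw [h.pow_three_eq, ← IsScalarTower.algebraMap_apply]
  cubePolar_eq := by rw [h.cubePolar_eq, ← IsScalarTower.algebraMap_apply]
  cubePolar_swap_eq := by rw [h.cubePolar_swap_eq, ← IsScalarTower.algebraMap_apply]
  sqCommutator_eq := by rw [h.sqCommutator_eq, ← IsScalarTower.algebraMap_apply]

theorem commute_pow_three_left (h : IsCliffordPair a p q g x y) : Commute (x ^ 3) y := by
  rw [h.pow_three_eq]
  exact Algebra.commutes a y

theorem commute_pow_three_right (h : IsCliffordPair a p q g x y) : Commute (y ^ 3) x := by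
  rw [← commute_cubePolar_left_iff, h.cubePolar_swap_eq]
  exact Algebra.commutes q y

theorem sq_mul_sq_add_mul_sq (h : IsCliffordPair a p q g x y) :
    x ^ 2 * y ^ 2 + (x * y) ^ 2 = y ^ 2 * x ^ 2 + (y * x) ^ 2 := by
  rw [← commute_cubePolar_right_iff, h.cubePolar_eq]
  exact Algebra.commutes p y

theorem skewCommutator_mul (h : IsCliffordPair a p q g x y) (hω : ω ^ 2 + ω + 1 = 0) :
    skewCommutator ω x y * x = ω ^ 2 • (x * skewCommutator ω x y) + algebraMap R A p := by
  rw [_root_.skewCommutator_mul hω, h.cubePolar_eq]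

theorem mul_skewCommutator (h : IsCliffordPair a p q g x y) (hω : ω ^ 2 + ω + 1 = 0) :
    y * skewCommutator ω x y = ω ^ 2 • (skewCommutator ω x y * y) + algebraMap R A q := by
  rw [_root_.mul_skewCommutator hω, h.cubePolar_swap_eq]

theorem skewCommutator_mul_self (h : IsCliffordPair a p q g x y) (hω : ω ^ 2 + ω + 1 = 0) :
    skewCommutator ω x y * skewCommutator ω x y =
      algebraMap R A g - (1 - ω) • (x * skewCommutator ω x y * y) - ω • (p • y + q • x) := by
  rw [_root_.skewCommutator_mul_self hω h.sq_mul_sq_add_mul_sq, h.sqCommutator_eq,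
    h.cubePolar_eq, h.cubePolar_swap_eq, ← Algebra.smul_def, ← Algebra.smul_def, ← mul_assoc]

theorem commute_skewCommutator_pow_three (h : IsCliffordPair a p q g x y)
    (hω : ω ^ 2 + ω + 1 = 0) : Commute (skewCommutator ω x y ^ 3) y := by
  refine commute_pow_three_of_mul_eq (c := -(ω * q)) hω ?_
  have : ω ^ 3 = 1 := by linear_combination (ω - 1) * hω
  rw [h.mul_skewCommutator hω, Algebra.algebraMap_eq_smul_one, Algebra.algebraMap_eq_smul_one]
  match_scalars <;> grind

theorem mul_twist (h : IsCliffordPair a p q g x y) (hω : ω ^ 2 + ω + 1 = 0) :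
    y * twist ω q x y = ω ^ 2 • (twist ω q x y * y) := by
  rw [twist, mul_add, add_mul, mul_smul_comm, smul_mul_assoc, ← mul_assoc,
    h.mul_skewCommutator hω, add_mul, smul_mul_assoc, ← Algebra.commutes, ← Algebra.smul_def]
  module

theorem commute_skewCommutator_pow_three_twist (h : IsCliffordPair a p q g x y)
    (hω : ω ^ 2 + ω + 1 = 0) : Commute (skewCommutator ω x y ^ 3) (twist ω q x y) :=
  (Algebra.commute_algebraMap_right q _).add_right
    (((Commute.pow_self _ 3).mul_right (h.commute_skewCommutator_pow_three hω)).smul_right _)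

theorem mul_mul_skewCommutator (h : IsCliffordPair a p q g x y) (hω : ω ^ 2 + ω + 1 = 0) :
    y * (x * skewCommutator ω x y) =
      ω • (x * skewCommutator ω x y * y) + algebraMap R A g - (ω * p) • y := by
  rw [← mul_assoc, mul_eq_smul_add_skewCommutator ω x y, add_mul, h.skewCommutator_mul_self hω,
    smul_mul_assoc, mul_assoc x y, h.mul_skewCommutator hω, mul_add, ← Algebra.commutes,
    ← Algebra.smul_def, mul_smul_comm, mul_assoc]
  match_scalars <;> grind

theorem mul_sq (h : IsCliffordPair a p q g x y) (hω : ω ^ 2 + ω + 1 = 0) :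
    y * x ^ 2 = ω ^ 2 • (x ^ 2 * y) - x * skewCommutator ω x y + algebraMap R A p := by
  rw [pow_two x, ← mul_assoc, mul_eq_smul_add_skewCommutator ω x y, add_mul,
    h.skewCommutator_mul hω, smul_mul_assoc, mul_assoc x y, mul_eq_smul_add_skewCommutator ω x y,
    mul_add, mul_smul_comm, mul_assoc]
  match_scalars <;> grind

theorem mul_sq_mul_skewCommutator (h : IsCliffordPair a p q g x y) (hω : ω ^ 2 + ω + 1 = 0) :
    y * (x ^ 2 * skewCommutator ω x y) = x ^ 2 * skewCommutator ω x y * y - q • x ^ 2 - g • x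
      + (ω * p) • (x * y) + p • skewCommutator ω x y := by
  rw [← mul_assoc, h.mul_sq hω, add_mul, sub_mul, mul_assoc x, h.skewCommutator_mul_self hω,
    smul_mul_assoc, mul_assoc _ y, h.mul_skewCommutator hω]
  simp only [mul_add, mul_sub, mul_smul_comm, pow_two, ← Algebra.commutes, ← Algebra.smul_def,
    mul_assoc]
  match_scalars <;> grind

end IsCliffordPair

section RegularMatrices

variable {B : Type*} [CommRing B] {ω a Y p q g : B}

/-- The matrix of left multiplication by `x` in the basis `cliffordBasis`. -/
def leftMulX (a : B) : Matrix (Fin 6) (Fin 6) B :=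
  !![0, 0, 0, 0, a, 0;
     0, 0, 0, 0, 0, a;
     1, 0, 0, 0, 0, 0;
     0, 1, 0, 0, 0, 0;
     0, 0, 1, 0, 0, 0;
     0, 0, 0, 1, 0, 0]

/-- The matrix of left multiplication by `y` in the basis `cliffordBasis`; the entry `Y` stands for
`y` acting on the right. -/
def leftMulY (ω Y p q g : B) : Matrix (Fin 6) (Fin 6) B :=
  !![Y, q, 0, g - ω * p * Y, p, 0;
     0, ω ^ 2 * Y, 1, 0, 0, p;
     0, 0, ω * Y, 0, 0, ω * p * Y - g;
     0, 0, 0, ω * Y, -1, 0;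
     0, 0, 0, 0, ω ^ 2 * Y, -q;
     0, 0, 0, 0, 0, Y]

/-- The matrix of left multiplication by `δ` in the basis `cliffordBasis`. -/
def leftMulδ (ω a Y p q g : B) : Matrix (Fin 6) (Fin 6) B :=
  !![0, g - ω * p * Y, p, 0, 0, -(ω ^ 2 * a * q);
     1, 0, 0, p, 0, (ω ^ 2 - ω) * a * Y;
     0, -(ω * q), 0, ω ^ 2 * (g - ω * p * Y), -(ω * p), 0;
     0, (ω - 1) * Y, ω ^ 2, 0, 0, -(ω * p);
     0, 0, 0, -q, 0, ω * (g - ω * p * Y);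
     0, 0, 0, (1 - ω ^ 2) * Y, ω, 0]

theorem leftMulX_mulVec (a : B) (v : Fin 6 → B) :
    leftMulX a *ᵥ v = ![a * v 4, a * v 5, v 0, v 1, v 2, v 3] := by
  ext i
  fin_cases i <;> simp [leftMulX, mulVec, dotProduct, Fin.sum_univ_six]

theorem leftMulY_mulVec (ω Y p q g : B) (v : Fin 6 → B) :
    leftMulY ω Y p q g *ᵥ v =
      ![Y * v 0 + q * v 1 + (g - ω * p * Y) * v 3 + p * v 4,
        ω ^ 2 * Y * v 1 + v 2 + p * v 5,
        ω * Y * v 2 + (ω * p * Y - g) * v 5,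
        ω * Y * v 3 - v 4,
        ω ^ 2 * Y * v 4 - q * v 5,
        Y * v 5] := by
  ext i
  fin_cases i <;> simp [leftMulY, mulVec, dotProduct, Fin.sum_univ_six, sub_eq_add_neg]

theorem leftMulδ_mulVec (ω a Y p q g : B) (v : Fin 6 → B) :
    leftMulδ ω a Y p q g *ᵥ v =
      ![(g - ω * p * Y) * v 1 + p * v 2 - ω ^ 2 * a * q * v 5,
        v 0 + p * v 3 + (ω ^ 2 - ω) * a * Y * v 5,
        -(ω * q) * v 1 + ω ^ 2 * (g - ω * p * Y) * v 3 - ω * p * v 4,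
        (ω - 1) * Y * v 1 + ω ^ 2 * v 2 - ω * p * v 5,
        -q * v 3 + ω * (g - ω * p * Y) * v 5,
        (1 - ω ^ 2) * Y * v 3 + ω * v 4] := by
  ext i
  fin_cases i <;> simp [leftMulδ, mulVec, dotProduct, Fin.sum_univ_six, sub_eq_add_neg]

theorem skewCommutator_leftMul (hω : ω ^ 2 + ω + 1 = 0) :
    skewCommutator ω (leftMulX a) (leftMulY ω Y p q g) = leftMulδ ω a Y p q g := by
  refine ext_of_mulVec_single fun j => ?_
  generalize (Pi.single j 1 : Fin 6 → B) = v
  simp only [skewCommutator, sub_mulVec, smul_mulVec, ← mulVec_mulVec, leftMulX_mulVec,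
    leftMulY_mulVec, leftMulδ_mulVec]
  ext i
  fin_cases i <;>
    simp only [Fin.reduceFinMk, Fin.mk_one, Fin.zero_eta, Pi.sub_apply, Pi.smul_apply, cons_val,
      smul_eq_mul] <;>
    grind

theorem isCliffordPair_leftMul (hω : ω ^ 2 + ω + 1 = 0) :
    IsCliffordPair a p q g (leftMulX a) (leftMulY ω Y p q g) := by
  constructor
  all_goals
    refine ext_of_mulVec_single fun j => ?_
    generalize (Pi.single j 1 : Fin 6 → B) = v
    simp only [pow_three, cubePolar, sqCommutator, pow_two, add_mulVec, sub_mulVec,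
      ← mulVec_mulVec, leftMulX_mulVec, leftMulY_mulVec, Algebra.algebraMap_eq_smul_one,
      smul_mulVec, one_mulVec]
    ext i
    fin_cases i <;>
      simp only [Fin.reduceFinMk, Fin.mk_one, Fin.zero_eta, Pi.add_apply, Pi.sub_apply,
        Pi.smul_apply, cons_val, smul_eq_mul] <;>
      grind

/-- The coordinates of `δ³` in the basis `cliffordBasis`. -/
def deltaCubeCoords (ω Y p q g : B) : Fin 6 → B :=
  ![-(ω * p * q), g - p * Y, (1 - ω ^ 2) * Y * (g - ω * p * Y), -q, (1 - ω) * q * Y, -3 * Y ^ 2]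

theorem leftMulδ_pow_three_mulVec_single (hω : ω ^ 2 + ω + 1 = 0) :
    leftMulδ ω a Y p q g ^ 3 *ᵥ Pi.single 0 1 = deltaCubeCoords ω Y p q g := by
  simp only [pow_three, ← mulVec_mulVec, leftMulδ_mulVec, deltaCubeCoords]
  ext i
  fin_cases i <;>
    simp only [Fin.reduceFinMk, Fin.mk_one, Fin.zero_eta, cons_val, ne_eq, Fin.reduceEq,
      not_false_eq_true, Pi.single_eq_same, Pi.single_eq_of_ne] <;>
    grind

theorem leftMulY_mulVec_single_zero (c : B) :
    leftMulY ω Y p q g *ᵥ Pi.single 0 c = Y • Pi.single 0 c := by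
  rw [leftMulY_mulVec]
  ext i
  fin_cases i <;> simp

theorem leftMulY_mulVec_deltaCubeCoords (hω : ω ^ 2 + ω + 1 = 0) :
    leftMulY ω Y p q g *ᵥ deltaCubeCoords ω Y p q g = Y • deltaCubeCoords ω Y p q g := by
  have h := (isCliffordPair_leftMul (a := 0) (Y := Y) (p := p) (q := q) (g := g)
    hω).commute_skewCommutator_pow_three hω
  rw [skewCommutator_leftMul hω] at h
  rw [← leftMulδ_pow_three_mulVec_single (a := 0) hω, mulVec_mulVec, ← h.eq, ← mulVec_mulVec,
    leftMulY_mulVec_single_zero, mulVec_smul]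

end RegularMatrices

section Eigenvectors

variable {B : Type*} [CommRing B] {ω a Y p q g : B}

theorem leftMulY_mulVec_single_add_smul_deltaCubeCoords (hω : ω ^ 2 + ω + 1 = 0) (c d : B) :
    leftMulY ω Y p q g *ᵥ (Pi.single 0 c + d • deltaCubeCoords ω Y p q g) =
      Y • (Pi.single 0 c + d • deltaCubeCoords ω Y p q g) := by
  rw [mulVec_add, mulVec_smul, leftMulY_mulVec_deltaCubeCoords hω, leftMulY_mulVec_single_zero,
    smul_add, smul_comm]

theorem entries_of_leftMulY_mulVec_eq_smul {v : Fin 6 → B}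
    (hv : leftMulY ω Y p q g *ᵥ v = Y • v) :
    (ω ^ 2 - 1) * Y * v 1 + v 2 + p * v 5 = 0 ∧ (ω - 1) * Y * v 2 = (g - ω * p * Y) * v 5 ∧
      v 4 = (ω - 1) * Y * v 3 ∧ (ω ^ 2 - 1) * Y * v 4 = q * v 5 := by
  rw [leftMulY_mulVec] at hv
  have h₁ : ω ^ 2 * Y * v 1 + v 2 + p * v 5 = Y * v 1 := congrFun hv 1
  have h₂ : ω * Y * v 2 + (ω * p * Y - g) * v 5 = Y * v 2 := congrFun hv 2
  have h₃ : ω * Y * v 3 - v 4 = Y * v 3 := congrFun hv 3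
  have h₄ : ω ^ 2 * Y * v 4 - q * v 5 = Y * v 4 := congrFun hv 4
  refine ⟨?_, ?_, ?_, ?_⟩
  · linear_combination h₁
  · linear_combination h₂
  · linear_combination -h₃
  · linear_combination h₄

theorem sub_one_ne_zero_of_sq_add_self_add_one (hω : ω ^ 2 + ω + 1 = 0) (h3 : (3 : B) ≠ 0) :
    ω - 1 ≠ 0 :=
  fun h => h3 (by linear_combination hω - (ω + 2) * h)

theorem sq_sub_one_ne_zero_of_sq_add_self_add_one (hω : ω ^ 2 + ω + 1 = 0) (h3 : (3 : B) ≠ 0) :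
    ω ^ 2 - 1 ≠ 0 :=
  fun h => h3 (by linear_combination (2 - ω) * hω + (ω - 1) * h)

theorem twist_leftMul_mulVec (hω : ω ^ 2 + ω + 1 = 0) {w : Fin 6 → B}
    (hw : leftMulY ω Y p q g *ᵥ w = Y • w) :
    twist ω q (leftMulX a) (leftMulY ω Y p q g) *ᵥ w =
      q • w + ((ω ^ 2 - 1) * Y) • (leftMulδ ω a Y p q g *ᵥ w) := by
  rw [twist, skewCommutator_leftMul hω, Algebra.algebraMap_eq_smul_one, add_mulVec, smul_mulVec,
    smul_mulVec, one_mulVec, ← mulVec_mulVec, hw, mulVec_smul, smul_smul]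

variable [IsDomain B]

theorem eq_single_zero_of_leftMulY_mulVec_eq_smul (hω : ω ^ 2 + ω + 1 = 0) (h3 : (3 : B) ≠ 0)
    (hY : Y ≠ 0) {v : Fin 6 → B} (hv : leftMulY ω Y p q g *ᵥ v = Y • v) (hv₅ : v 5 = 0) :
    v = Pi.single 0 (v 0) := by
  have hω₁ := sub_one_ne_zero_of_sq_add_self_add_one hω h3
  have hω₂ := sq_sub_one_ne_zero_of_sq_add_self_add_one hω h3
  obtain ⟨h₁, h₂, h₃, h₄⟩ := entries_of_leftMulY_mulVec_eq_smul hv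
  have hv₄ : v 4 = 0 := by simpa [hv₅, hω₂, hY] using h₄
  have hv₃ : v 3 = 0 := by simpa [hv₄, hω₁, hY] using h₃.symm
  have hv₂ : v 2 = 0 := by simpa [hv₅, hω₁, hY] using h₂
  have hv₁ : v 1 = 0 := by simpa [hv₅, hv₂, hω₂, hY] using h₁
  ext i
  fin_cases i <;> simp [*]

theorem sq_dvd_of_leftMulY_mulVec_eq_smul (hY : Prime Y) (hq : ¬ Y ∣ q) {v : Fin 6 → B}
    (hv : leftMulY ω Y p q g *ᵥ v = Y • v) : Y ^ 2 ∣ v 5 := by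
  obtain ⟨-, -, h₃, h₄⟩ := entries_of_leftMulY_mulVec_eq_smul hv
  obtain ⟨s, hs⟩ : Y ∣ v 5 :=
    (hY.dvd_or_dvd ⟨(ω ^ 2 - 1) * v 4, by linear_combination -h₄⟩).resolve_left hq
  have hqs : q * s = Y * ((ω ^ 2 - 1) * (ω - 1) * v 3) := by
    refine mul_left_cancel₀ hY.ne_zero ?_
    linear_combination -h₄ + (ω ^ 2 - 1) * Y * h₃ - q * hs
  obtain ⟨t, rfl⟩ : Y ∣ s := (hY.dvd_or_dvd ⟨_, hqs⟩).resolve_left hq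
  exact ⟨t, by rw [hs]; ring⟩

theorem exists_eq_single_add_smul_deltaCubeCoords (hω : ω ^ 2 + ω + 1 = 0) (h3 : IsUnit (3 : B))
    (hY : Prime Y) (hq : ¬ Y ∣ q) {v : Fin 6 → B} (hv : leftMulY ω Y p q g *ᵥ v = Y • v) :
    ∃ c d : B, v = Pi.single 0 c + d • deltaCubeCoords ω Y p q g := by
  obtain ⟨d, hd⟩ : 3 * Y ^ 2 ∣ v 5 :=
    h3.mul_left_dvd.2 (sq_dvd_of_leftMulY_mulVec_eq_smul hY hq hv)
  set w := v + d • deltaCubeCoords ω Y p q g with hw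
  have hwY : leftMulY ω Y p q g *ᵥ w = Y • w := by
    rw [mulVec_add, mulVec_smul, hv, leftMulY_mulVec_deltaCubeCoords hω, smul_add, smul_comm]
  have hw₅ : w 5 = 0 := by
    simp only [hw, Pi.add_apply, hd, Pi.smul_apply, deltaCubeCoords, smul_eq_mul, cons_val]
    ring
  refine ⟨w 0, -d, ?_⟩
  rw [← eq_single_zero_of_leftMulY_mulVec_eq_smul hω h3.ne_zero hY.ne_zero hwY hw₅, hw, neg_smul,
    add_neg_cancel_right]

theorem eq_zero_of_twist_leftMul_mulVec_eq_zero (hω : ω ^ 2 + ω + 1 = 0) (h3 : (3 : B) ≠ 0)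
    (hY : Prime Y) (hq : ¬ Y ∣ q) {c d : B}
    (h : twist ω q (leftMulX a) (leftMulY ω Y p q g) *ᵥ
      (Pi.single 0 c + d • deltaCubeCoords ω Y p q g) = 0) : c = 0 ∧ d = 0 := by
  have hω₀ : ω ≠ 0 := by rintro rfl; simp at hω
  have hω₁ := sub_one_ne_zero_of_sq_add_self_add_one hω h3
  have hω₂ := sq_sub_one_ne_zero_of_sq_add_self_add_one hω h3
  rw [twist_leftMul_mulVec hω (leftMulY_mulVec_single_add_smul_deltaCubeCoords hω c d),
    leftMulδ_mulVec] at h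
  have h₁ := congrFun h 1
  have h₄ := congrFun h 4
  simp only [Pi.add_apply, Pi.smul_apply, Pi.zero_apply, deltaCubeCoords, cons_val, smul_eq_mul,
    ne_eq, Fin.reduceEq, not_false_eq_true, Pi.single_eq_same, Pi.single_eq_of_ne] at h₁ h₄
  have hd : d * (Y * (ω * (ω - 1)) * (q ^ 2 - Y * (3 * (ω + 1) * Y * (g - ω * p * Y)))) = 0 := by
    linear_combination h₄
  obtain rfl : d = 0 := by
    refine (mul_eq_zero.1 hd).resolve_right ?_
    refine mul_ne_zero (mul_ne_zero hY.ne_zero (mul_ne_zero hω₀ hω₁)) fun h₀ => hq ?_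
    exact hY.dvd_of_dvd_pow ⟨_, sub_eq_zero.1 h₀⟩
  exact ⟨by simpa [hω₂, hY.ne_zero] using h₁, rfl⟩

end Eigenvectors

section CliffordBasis

variable {R A : Type*} [CommRing R] [Ring A] [Algebra R A] {ω a p q g : R} {x y : A}

/-- The family `1, δ, x, xδ, x², x²δ`, which spans the algebra generated by a Clifford pair as a
right module over `R[y]`. -/
def cliffordBasis (ω : R) (x y : A) : Fin 6 → A :=
  ![1, skewCommutator ω x y, x, x * skewCommutator ω x y, x ^ 2, x ^ 2 * skewCommutator ω x y]

namespace IsCliffordPair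

theorem left_smul_cliffordBasis (h : IsCliffordPair a p q g x y) :
    x • cliffordBasis ω x y = cliffordBasis ω x y ᵥ* (aeval y).mapMatrix (leftMulX (C a)) := by
  have hx : x * (x * x) = algebraMap R A a := by rw [← h.pow_three_eq, pow_three]
  ext i
  fin_cases i <;>
    simp [cliffordBasis, leftMulX, vecMul, dotProduct, Fin.sum_univ_six, pow_two, hx, ← mul_assoc x,
      ← Algebra.commutes]

theorem right_smul_cliffordBasis (h : IsCliffordPair a p q g x y) (hω : ω ^ 2 + ω + 1 = 0) :
    y • cliffordBasis ω x y =
      cliffordBasis ω x y ᵥ* (aeval y).mapMatrix (leftMulY (C ω) X (C p) (C q) (C g)) := by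
  ext i
  fin_cases i <;>
    simp only [cliffordBasis, leftMulY, vecMul, dotProduct, AlgHom.mapMatrix_apply, map_apply,
      Fin.sum_univ_six, Fin.reduceFinMk, Fin.mk_one, Fin.zero_eta, of_apply, Pi.smul_apply,
      smul_eq_mul, cons_val, mul_eq_smul_add_skewCommutator ω x y, h.mul_skewCommutator hω,
      h.mul_mul_skewCommutator hω, h.mul_sq hω, h.mul_sq_mul_skewCommutator hω, map_sub, map_neg,
      map_mul, ← map_pow, map_one, map_zero, aeval_C, aeval_X, Algebra.algebraMap_eq_smul_one,
      mul_smul_comm, smul_mul_assoc, one_mul, mul_one, mul_neg, mul_zero, mul_sub] <;>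
    module

end IsCliffordPair

end CliffordBasis

/-- The pair `(x, y)` is a generic Clifford pair: it generates `A`, and it maps to every other
Clifford pair with the same parameters. Thus `A` is the quotient of the free algebra on `x`, `y` by
the relations of `IsCliffordPair`. -/
structure IsUniversalCliffordPair {R : Type u} {A : Type v} [CommRing R] [Ring A] [Algebra R A]
    (a p q g : R) (x y : A) : Prop extends IsCliffordPair a p q g x y where
  adjoin_eq_top : Algebra.adjoin R {x, y} = ⊤
  exists_algHom : ∀ {B : Type u} [Ring B] [Algebra R B] {x' y' : B},
    IsCliffordPair a p q g x' y' → ∃ f : A →ₐ[R] B, f x = x' ∧ f y = y'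

namespace IsUniversalCliffordPair

variable {R : Type u} {A : Type v} [CommRing R] [Ring A] [Algebra R A] {ω a p q g : R} {x y : A}

section RegularRepresentation

variable (h : IsUniversalCliffordPair a p q g x y) (hω : ω ^ 2 + ω + 1 = 0)

include h hω

theorem exists_regularRep : ∃ ρ : A →ₐ[R] Matrix (Fin 6) (Fin 6) R[X],
    ρ x = leftMulX (C a) ∧ ρ y = leftMulY (C ω) X (C p) (C q) (C g) :=
  h.exists_algHom (isCliffordPair_leftMul (C_sq_add_C_add_one_eq_zero hω)).restrictScalars

/-- The regular representation of `A` in the basis `cliffordBasis` over `R[y]`, which acts on the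
right. -/
noncomputable def regularRep : A →ₐ[R] Matrix (Fin 6) (Fin 6) R[X] :=
  (h.exists_regularRep hω).choose

theorem regularRep_left : h.regularRep hω x = leftMulX (C a) :=
  (h.exists_regularRep hω).choose_spec.1

theorem regularRep_right : h.regularRep hω y = leftMulY (C ω) X (C p) (C q) (C g) :=
  (h.exists_regularRep hω).choose_spec.2

theorem smul_cliffordBasis (z : A) :
    z • cliffordBasis ω x y = cliffordBasis ω x y ᵥ* (aeval y).mapMatrix (h.regularRep hω z) := by
  have hz : z ∈ Algebra.adjoin R {x, y} := h.adjoin_eq_top ▸ Algebra.mem_top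
  induction hz using Algebra.adjoin_induction with
  | mem z hz =>
    obtain rfl | rfl := hz
    · rw [regularRep_left, h.left_smul_cliffordBasis]
    · rw [regularRep_right, h.right_smul_cliffordBasis hω]
  | algebraMap r =>
    rw [AlgHom.commutes, AlgHom.commutes, Algebra.algebraMap_eq_smul_one,
      Algebra.algebraMap_eq_smul_one, vecMul_smul, vecMul_one, smul_assoc, one_smul]
  | add z w _ _ hz hw => rw [add_smul, hz, hw, map_add, map_add, vecMul_add]
  | mul z w _ _ hz hw =>
    rw [mul_smul, hw, ← smul_vecMul, hz, vecMul_vecMul, map_mul, map_mul]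

theorem eq_dotProduct_regularRep (z : A) :
    z = cliffordBasis ω x y ⬝ᵥ fun i => aeval y ((h.regularRep hω z *ᵥ Pi.single 0 1) i) := by
  simp only [mulVec_single_one]
  exact (mul_one z).symm.trans (congrFun (h.smul_cliffordBasis hω z) 0)

theorem regularRep_mulVec_injective :
    Function.Injective fun z => h.regularRep hω z *ᵥ Pi.single 0 1 := fun z w hzw => by
  rw [h.eq_dotProduct_regularRep hω z, h.eq_dotProduct_regularRep hω w]
  exact congrArg (fun v => cliffordBasis ω x y ⬝ᵥ fun i => aeval y (v i)) hzw

theorem regularRep_skewCommutator :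
    h.regularRep hω (skewCommutator ω x y) = leftMulδ (C ω) (C a) X (C p) (C q) (C g) := by
  rw [map_skewCommutator, regularRep_left, regularRep_right,
    ← skewCommutator_algebraMap (S := R[X]), algebraMap_eq,
    skewCommutator_leftMul (C_sq_add_C_add_one_eq_zero hω)]

theorem regularRep_twist :
    h.regularRep hω (twist ω q x y) =
      twist (C ω) (C q) (leftMulX (C a)) (leftMulY (C ω) X (C p) (C q) (C g)) := by
  rw [map_twist, regularRep_left, regularRep_right, ← twist_algebraMap (S := R[X]), algebraMap_eq]

theorem regularRep_aeval_mulVec {v : Fin 6 → R[X]}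
    (hv : leftMulY (C ω) X (C p) (C q) (C g) *ᵥ v = (X : R[X]) • v) (f : R[X]) :
    h.regularRep hω (aeval y f) *ᵥ v = f • v := by
  rw [← aeval_algHom_apply, regularRep_right, aeval_mulVec_of_mulVec_eq_X_smul hv]

theorem regularRep_mulVec_single (c d : R[X]) :
    h.regularRep hω (aeval y c + aeval y d * skewCommutator ω x y ^ 3) *ᵥ Pi.single 0 1 =
      Pi.single 0 c + d • deltaCubeCoords (C ω) X (C p) (C q) (C g) := by
  have hCω := C_sq_add_C_add_one_eq_zero hω
  rw [map_add, map_mul, map_pow, regularRep_skewCommutator, add_mulVec, ← mulVec_mulVec,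
    leftMulδ_pow_three_mulVec_single hCω,
    regularRep_aeval_mulVec _ _ (leftMulY_mulVec_deltaCubeCoords hCω),
    regularRep_aeval_mulVec _ _ (leftMulY_mulVec_single_zero 1), ← Pi.single_smul, smul_eq_mul,
    mul_one]

end RegularRepresentation

variable [IsDomain R]

theorem exists_eq_of_commute (h : IsUniversalCliffordPair a p q g x y) (hω : ω ^ 2 + ω + 1 = 0)
    (h3 : IsUnit (3 : R)) (hq : q ≠ 0) {z : A} (hz : Commute z y) :
    ∃ c d : R[X], z = aeval y c + aeval y d * skewCommutator ω x y ^ 3 := by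
  have hv : leftMulY (C ω) X (C p) (C q) (C g) *ᵥ (h.regularRep hω z *ᵥ Pi.single 0 1) =
      (X : R[X]) • (h.regularRep hω z *ᵥ Pi.single 0 1) := by
    rw [← h.regularRep_right hω, mulVec_mulVec, ← map_mul, ← hz.eq, map_mul, ← mulVec_mulVec,
      regularRep_right, leftMulY_mulVec_single_zero, mulVec_smul]
  obtain ⟨c, d, hcd⟩ := exists_eq_single_add_smul_deltaCubeCoords
    (C_sq_add_C_add_one_eq_zero hω) (by simpa only [map_ofNat] using h3.map C) prime_X
    (by rwa [X_dvd_iff, coeff_C_zero]) hv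
  exact ⟨c, d,
    h.regularRep_mulVec_injective hω (hcd.trans (h.regularRep_mulVec_single hω c d).symm)⟩

theorem eq_zero_of_twist_mul_eq_zero (h : IsUniversalCliffordPair a p q g x y)
    (hω : ω ^ 2 + ω + 1 = 0) (h3 : (3 : R) ≠ 0) (hq : q ≠ 0) {c d : R[X]}
    (hcd : twist ω q x y * (aeval y c + aeval y d * skewCommutator ω x y ^ 3) = 0) :
    c = 0 ∧ d = 0 := by
  refine eq_zero_of_twist_leftMul_mulVec_eq_zero (a := C a) (p := C p) (g := C g)
    (C_sq_add_C_add_one_eq_zero hω) (by simpa only [map_ofNat] using C_ne_zero.2 h3) prime_X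
    (by rwa [X_dvd_iff, coeff_C_zero]) ?_
  rw [← h.regularRep_mulVec_single hω, ← h.regularRep_twist hω, mulVec_mulVec, ← map_mul, hcd,
    map_zero, zero_mulVec]

theorem comp_eq_self_of_commute_twist (h : IsUniversalCliffordPair a p q g x y)
    (hω : ω ^ 2 + ω + 1 = 0) (h3 : (3 : R) ≠ 0) (hq : q ≠ 0) {c d : R[X]}
    (hcd : Commute (aeval y c + aeval y d * skewCommutator ω x y ^ 3) (twist ω q x y)) :
    c.comp (C (ω ^ 2) * X) = c ∧ d.comp (C (ω ^ 2) * X) = d := by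
  have hyu := h.mul_twist hω
  have hδu := h.commute_skewCommutator_pow_three_twist hω
  rw [← sub_eq_zero, ← sub_eq_zero (a := d.comp _)]
  refine h.eq_zero_of_twist_mul_eq_zero hω h3 hq ?_
  rw [← sub_eq_zero.2 hcd.eq, add_mul, aeval_mul_eq_mul_aeval_comp hyu,
    mul_assoc _ _ (twist ω q x y), hδu.eq, ← mul_assoc _ (twist ω q x y),
    aeval_mul_eq_mul_aeval_comp hyu, map_sub, map_sub]
  noncomm_ring

theorem exists_eq_of_mem_center (h : IsUniversalCliffordPair a p q g x y)
    (hω : IsPrimitiveRoot ω 3) (h3 : IsUnit (3 : R)) (hq : q ≠ 0) {z : A}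
    (hz : z ∈ Subalgebra.center R A) :
    ∃ c d : R[X], z = aeval (y ^ 3) c + aeval (y ^ 3) d * skewCommutator ω x y ^ 3 := by
  have hω' := sq_add_self_add_one_eq_zero_of_isPrimitiveRoot hω
  obtain ⟨c, d, rfl⟩ := h.exists_eq_of_commute hω' h3 hq (Subalgebra.mem_center_iff.1 hz y).symm
  obtain ⟨hc, hd⟩ := h.comp_eq_self_of_commute_twist hω' h3.ne_zero hq
    (Subalgebra.mem_center_iff.1 hz _).symm
  have hω₂ : IsPrimitiveRoot (ω ^ 2) 3 := hω.pow_of_coprime 2 (by norm_num)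
  refine ⟨contract 3 c, contract 3 d, ?_⟩
  rw [← expand_aeval, ← expand_aeval, expand_contract_of_comp_C_mul_X_eq_self three_ne_zero hω₂ hc,
    expand_contract_of_comp_C_mul_X_eq_self three_ne_zero hω₂ hd]

theorem eq_zero_of_aeval_pow_three_add_eq_zero (h : IsUniversalCliffordPair a p q g x y)
    (hω : ω ^ 2 + ω + 1 = 0) (h3 : (3 : R) ≠ 0) (hq : q ≠ 0) {c d : R[X]}
    (hcd : aeval (y ^ 3) c + aeval (y ^ 3) d * skewCommutator ω x y ^ 3 = 0) : c = 0 ∧ d = 0 := by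
  rw [← expand_aeval, ← expand_aeval] at hcd
  obtain ⟨hc, hd⟩ := h.eq_zero_of_twist_mul_eq_zero hω h3 hq (by rw [hcd, mul_zero])
  exact ⟨(expand_eq_zero three_pos).1 hc, (expand_eq_zero three_pos).1 hd⟩

theorem existsUnique_of_mem_center (h : IsUniversalCliffordPair a p q g x y)
    (hω : IsPrimitiveRoot ω 3) (h3 : IsUnit (3 : R)) (hq : q ≠ 0) {z : A}
    (hz : z ∈ Subalgebra.center R A) :
    ∃! c : R[X] × R[X],
      z = aeval (y ^ 3) c.1 + aeval (y ^ 3) c.2 * skewCommutator ω x y ^ 3 := by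
  obtain ⟨c, d, hcd⟩ := h.exists_eq_of_mem_center hω h3 hq hz
  refine ⟨(c, d), hcd, fun e he => ?_⟩
  have hsub : aeval (y ^ 3) (e.1 - c) +
      aeval (y ^ 3) (e.2 - d) * skewCommutator ω x y ^ 3 = 0 := by
    rw [map_sub, map_sub, sub_mul, sub_add_sub_comm, ← he, hcd, sub_self]
  obtain ⟨h₁, h₂⟩ := h.eq_zero_of_aeval_pow_three_add_eq_zero
    (sq_add_self_add_one_eq_zero_of_isPrimitiveRoot hω) h3.ne_zero hq hsub
  exact Prod.ext (sub_eq_zero.1 h₁) (sub_eq_zero.1 h₂)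

end IsUniversalCliffordPair

namespace GCA

variable (k : Type u) [Field k]

theorem commute_gx_pow_three : Commute (gx k ^ 3) (gy k) := by
  simpa [gx, gy, commute_iff_eq] using RingQuot.mkAlgHom_rel k (GCRel.rel1 (k := k))

theorem commute_gy_pow_three : Commute (gy k ^ 3) (gx k) := by
  simpa [gx, gy, commute_iff_eq] using (RingQuot.mkAlgHom_rel k (GCRel.rel2 (k := k))).symm

theorem gx_sq_mul_gy_sq_add_mul_sq :
    gx k ^ 2 * gy k ^ 2 + (gx k * gy k) ^ 2 = gy k ^ 2 * gx k ^ 2 + (gy k * gx k) ^ 2 := by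
  simpa [gx, gy] using RingQuot.mkAlgHom_rel k (GCRel.rel3 (k := k))

theorem adjoin_gx_gy : Algebra.adjoin k {gx k, gy k} = ⊤ := by
  have h : {gx k, gy k} = RingQuot.mkAlgHom k (GCRel k) '' Set.range (FreeAlgebra.ι k) := by
    rw [← Set.range_comp]
    ext z
    simp [gx, gy, Fin.exists_fin_two, eq_comm]
  rw [h, ← AlgHom.map_adjoin, FreeAlgebra.adjoin_range_ι, Algebra.map_top, AlgHom.range_eq_top]
  exact RingQuot.mkAlgHom_surjective k _

theorem exists_algHom {B : Type*} [Ring B] [Algebra k B] {x y : B} (hx : Commute (x ^ 3) y)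
    (hy : Commute (y ^ 3) x) (hxy : x ^ 2 * y ^ 2 + (x * y) ^ 2 = y ^ 2 * x ^ 2 + (y * x) ^ 2) :
    ∃ f : GCA k →ₐ[k] B, f (gx k) = x ∧ f (gy k) = y := by
  refine ⟨RingQuot.liftAlgHom k ⟨FreeAlgebra.lift k ![x, y], ?_⟩, ?_, ?_⟩
  · rintro _ _ (_ | _ | _)
    · simpa using hx.eq
    · simpa using hy.eq.symm
    · simpa using hxy
  · simp [gx]
  · simp [gy]

theorem mem_center_of_commute {z : GCA k} (hx : Commute z (gx k)) (hy : Commute z (gy k)) :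
    z ∈ Subalgebra.center k (GCA k) := by
  have h : Algebra.adjoin k {gx k, gy k} ≤ Subalgebra.centralizer k {z} :=
    Algebra.adjoin_le (by rintro w (rfl | rfl) _ rfl <;> assumption)
  rw [adjoin_gx_gy] at h
  exact Subalgebra.mem_center_iff.2 fun w => (h trivial z rfl).symm

theorem gβ_eq_cubePolar : gβ k = cubePolar (gy k) (gx k) := by
  rw [gβ, cubePolar]
  abel

theorem gx_pow_three_mem_center : gx k ^ 3 ∈ Subalgebra.center k (GCA k) :=
  mem_center_of_commute k (Commute.pow_self _ _) (commute_gx_pow_three k)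

theorem gα_mem_center : gα k ∈ Subalgebra.center k (GCA k) :=
  mem_center_of_commute k (commute_cubePolar_left_iff.2 (commute_gx_pow_three k))
    (commute_cubePolar_right_iff.2 (gx_sq_mul_gy_sq_add_mul_sq k))

theorem gβ_mem_center : gβ k ∈ Subalgebra.center k (GCA k) := by
  rw [gβ_eq_cubePolar]
  exact mem_center_of_commute k
    (commute_cubePolar_right_iff.2 (gx_sq_mul_gy_sq_add_mul_sq k).symm)
    (commute_cubePolar_left_iff.2 (commute_gy_pow_three k))

theorem gγ_mem_center : gγ k ∈ Subalgebra.center k (GCA k) :=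
  mem_center_of_commute k
    (commute_sqCommutator_left (commute_gx_pow_three k) (gx_sq_mul_gy_sq_add_mul_sq k))
    (commute_sqCommutator_right (commute_gy_pow_three k) (gx_sq_mul_gy_sq_add_mul_sq k))

/-- The polynomial ring over `k` whose four indeterminates stand for `x³`, `α`, `β`, `γ`. -/
abbrev ParamRing := MvPolynomial (Fin 4) k

/-- The central elements `x³`, `α`, `β`, `γ`, at which the indeterminates of `ParamRing` are
evaluated. -/
def centralParam : Fin 4 → Subalgebra.center k (GCA k) :=
  ![⟨gx k ^ 3, gx_pow_three_mem_center k⟩, ⟨gα k, gα_mem_center k⟩, ⟨gβ k, gβ_mem_center k⟩,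
    ⟨gγ k, gγ_mem_center k⟩]

/-- The algebra structure of `GCA k` over `ParamRing k`, by evaluation at `centralParam k`. -/
noncomputable instance : Algebra (ParamRing k) (GCA k) :=
  ((Subalgebra.center k (GCA k)).val.comp
    (MvPolynomial.aeval (centralParam k))).toRingHom.toAlgebra' fun c z =>
      (Subalgebra.mem_center_iff.1 (MvPolynomial.aeval (centralParam k) c).2 z).symm

theorem algebraMap_eq_aeval_centralParam (c : ParamRing k) :
    algebraMap (ParamRing k) (GCA k) c = MvPolynomial.aeval (centralParam k) c :=
  rfl

theorem algebraMap_X (i : Fin 4) :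
    algebraMap (ParamRing k) (GCA k) (.X i) = centralParam k i := by
  rw [algebraMap_eq_aeval_centralParam, MvPolynomial.aeval_X]

instance : IsScalarTower k (ParamRing k) (GCA k) :=
  .of_algebraMap_eq fun r => by
    rw [algebraMap_eq_aeval_centralParam, MvPolynomial.algebraMap_eq, MvPolynomial.aeval_C]
    rfl

theorem isCliffordPair :
    IsCliffordPair (R := ParamRing k) (.X 0) (.X 1) (.X 2) (.X 3) (gx k) (gy k) where
  pow_three_eq := (algebraMap_X k 0).symm
  cubePolar_eq := (algebraMap_X k 1).symm
  cubePolar_swap_eq := (gβ_eq_cubePolar k).symm.trans (algebraMap_X k 2).symm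
  sqCommutator_eq := (algebraMap_X k 3).symm

theorem adjoin_paramRing_gx_gy : Algebra.adjoin (ParamRing k) {gx k, gy k} = ⊤ := by
  have h : Algebra.adjoin k {gx k, gy k} ≤
      (Algebra.adjoin (ParamRing k) {gx k, gy k}).restrictScalars k :=
    Algebra.adjoin_le Algebra.subset_adjoin
  rw [adjoin_gx_gy] at h
  exact top_le_iff.1 fun z _ => h trivial

section

variable {B : Type*} [Ring B] [Algebra k B] [Algebra (ParamRing k) B]
  [IsScalarTower k (ParamRing k) B]

theorem map_algebraMap_paramRing (f : GCA k →ₐ[k] B)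
    (h : IsCliffordPair (R := ParamRing k) (.X 0) (.X 1) (.X 2) (.X 3) (f (gx k)) (f (gy k)))
    (c : ParamRing k) : f (algebraMap _ _ c) = algebraMap _ B c := by
  suffices f.comp (IsScalarTower.toAlgHom k (ParamRing k) (GCA k)) =
      IsScalarTower.toAlgHom k (ParamRing k) B from DFunLike.congr_fun this c
  have h₀ := isCliffordPair k
  ext i
  fin_cases i
  · simp [← h₀.pow_three_eq, ← h.pow_three_eq]
  · simp [← h₀.cubePolar_eq, ← h.cubePolar_eq, cubePolar]
  · simp [← h₀.cubePolar_swap_eq, ← h.cubePolar_swap_eq, cubePolar]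
  · simp [← h₀.sqCommutator_eq, ← h.sqCommutator_eq, sqCommutator]

theorem exists_paramRing_algHom {x y : B}
    (h : IsCliffordPair (R := ParamRing k) (.X 0) (.X 1) (.X 2) (.X 3) x y) :
    ∃ f : GCA k →ₐ[ParamRing k] B, f (gx k) = x ∧ f (gy k) = y := by
  obtain ⟨f, rfl, rfl⟩ :=
    exists_algHom k h.commute_pow_three_left h.commute_pow_three_right h.sq_mul_sq_add_mul_sq
  exact ⟨⟨f.toRingHom, map_algebraMap_paramRing k f h⟩, rfl, rfl⟩

end

theorem isUniversalCliffordPair :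
    IsUniversalCliffordPair (R := ParamRing k) (.X 0) (.X 1) (.X 2) (.X 3) (gx k) (gy k) where
  toIsCliffordPair := isCliffordPair k
  adjoin_eq_top := adjoin_paramRing_gx_gy k
  exists_algHom {B} _ _ _ _ h :=
    letI : Algebra k B := Algebra.compHom B (algebraMap k (ParamRing k))
    haveI : IsScalarTower k (ParamRing k) B := .of_algebraMap_eq fun _ => rfl
    exists_paramRing_algHom k h

theorem algebraMap_mem_adjoin (c : ParamRing k) :
    algebraMap (ParamRing k) (GCA k) c ∈
      Algebra.adjoin k {gx k ^ 3, gy k ^ 3, gα k, gβ k, gγ k} := by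
  induction c using MvPolynomial.induction_on with
  | C r =>
    rw [← MvPolynomial.algebraMap_eq, ← IsScalarTower.algebraMap_apply]
    exact Subalgebra.algebraMap_mem _ r
  | add c d hc hd =>
    rw [map_add]
    exact add_mem hc hd
  | mul_X c i hc =>
    rw [map_mul, algebraMap_X]
    refine mul_mem hc (Algebra.subset_adjoin ?_)
    fin_cases i <;> simp [centralParam]

theorem mem_adjoin_iff_exists_aeval {s : GCA k} :
    s ∈ Algebra.adjoin k {gx k ^ 3, gy k ^ 3, gα k, gβ k, gγ k} ↔
      ∃ f : (ParamRing k)[X], aeval (gy k ^ 3) f = s := by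
  constructor
  · have hle : Algebra.adjoin k {gx k ^ 3, gy k ^ 3, gα k, gβ k, gγ k} ≤
        (aeval (R := ParamRing k) (gy k ^ 3)).range.restrictScalars k := by
      refine Algebra.adjoin_le ?_
      rintro _ (rfl | rfl | rfl | rfl | rfl)
      · exact ⟨C (.X 0), (aeval_C _ _).trans (algebraMap_X k 0)⟩
      · exact ⟨X, aeval_X _⟩
      · exact ⟨C (.X 1), (aeval_C _ _).trans (algebraMap_X k 1)⟩
      · exact ⟨C (.X 2), (aeval_C _ _).trans (algebraMap_X k 2)⟩
      · exact ⟨C (.X 3), (aeval_C _ _).trans (algebraMap_X k 3)⟩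
    exact fun hs => hle hs
  · rintro ⟨f, rfl⟩
    rw [aeval_eq_sum_range]
    refine sum_mem fun i _ => ?_
    rw [Algebra.smul_def]
    exact mul_mem (algebraMap_mem_adjoin k _) (pow_mem (Algebra.subset_adjoin (by simp)) i)

theorem gδ_eq_skewCommutator (ω : k) : gδ k ω = skewCommutator ω (gx k) (gy k) := by
  rw [gδ, skewCommutator, Algebra.smul_def]

theorem existsUnique_of_mem_center {ω : k} (hω : IsPrimitiveRoot ω 3) {z : GCA k}
    (hz : z ∈ Subalgebra.center k (GCA k)) :
    ∃! c : (ParamRing k)[X] × (ParamRing k)[X],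
      z = aeval (gy k ^ 3) c.1 + aeval (gy k ^ 3) c.2 * gδ k ω ^ 3 := by
  have h3 : IsUnit (3 : ParamRing k) := by
    have : NeZero ((3 : ℕ) : k) := hω.neZero'
    exact (NeZero.ne ((3 : ℕ) : k)).isUnit.map (algebraMap k (ParamRing k))
  rw [gδ_eq_skewCommutator, ← skewCommutator_algebraMap (S := ParamRing k)]
  exact (isUniversalCliffordPair k).existsUnique_of_mem_center
    (hω.map_of_injective (FaithfulSMul.algebraMap_injective k (ParamRing k))) h3
    (MvPolynomial.X_ne_zero 2) (Subalgebra.mem_center_iff.2 (Subalgebra.mem_center_iff.1 hz))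

end GCA

theorem stmt8_general (k : Type*) [Field k] (ω : k) (hω : IsPrimitiveRoot ω 3) :
    ∀ z : Subalgebra.center k (GCA k),
      ∃! c : Algebra.adjoin k ({gx k ^ 3, gy k ^ 3, gα k, gβ k, gγ k} : Set (GCA k)) ×
          Algebra.adjoin k ({gx k ^ 3, gy k ^ 3, gα k, gβ k, gγ k} : Set (GCA k)),
        (z : GCA k) = (c.1 : GCA k) * 1 + (c.2 : GCA k) * gδ k ω ^ 3 := by
  intro z
  simp only [mul_one]
  obtain ⟨⟨f₁, f₂⟩, hf, hf_unique⟩ := GCA.existsUnique_of_mem_center k hω z.2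
  refine ⟨(⟨_, (GCA.mem_adjoin_iff_exists_aeval k).2 ⟨f₁, rfl⟩⟩,
    ⟨_, (GCA.mem_adjoin_iff_exists_aeval k).2 ⟨f₂, rfl⟩⟩), hf, ?_⟩
  rintro ⟨⟨s₁, hs₁⟩, ⟨s₂, hs₂⟩⟩ hs
  obtain ⟨g₁, rfl⟩ := (GCA.mem_adjoin_iff_exists_aeval k).1 hs₁
  obtain ⟨g₂, rfl⟩ := (GCA.mem_adjoin_iff_exists_aeval k).1 hs₂
  obtain ⟨rfl, rfl⟩ := Prod.mk.inj (hf_unique (g₁, g₂) hs)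
  rfl

theorem stmt8 (k : Type*) [Field k] (h2 : (2 : k) ≠ 0) (h3 : (3 : k) ≠ 0)
    (ω : k) (hω : IsPrimitiveRoot ω 3) :
    ∀ z : Subalgebra.center k (GCA k),
      ∃! c : Algebra.adjoin k ({gx k ^ 3, gy k ^ 3, gα k, gβ k, gγ k} : Set (GCA k)) ×
          Algebra.adjoin k ({gx k ^ 3, gy k ^ 3, gα k, gβ k, gγ k} : Set (GCA k)),
        (z : GCA k) = (c.1 : GCA k) * 1 + (c.2 : GCA k) * gδ k ω ^ 3 :=
  stmt8_general k ω hω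
end

section
/- Let k be any field and let f, g, h be polynomials in k[a,d] satisfying h³ = a·f³ + d·g³. Then f = g = h = 0. -/
open MvPolynomial

/-! Fix a monomial order and read exponent vectors modulo `n`: the degree of `h ^ n` reduces to `0`
and that of a nonzero `X i * f i ^ n` to the unit vector at `i`. These classes are distinct for
`n ≠ 1`, so leading monomials on the right-hand side of `h ^ n = ∑ i ∈ s, X i * f i ^ n` cannot
cancel, and none of them can equal the leading monomial of the left-hand side. -/

section Exponents

variable {σ : Type*} {n : ℕ}

lemma modEq_of_add_nsmul_eq_add_nsmul {c d a b : σ →₀ ℕ} (h : c + n • a = d + n • b) (x : σ) :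
    c x ≡ d x [MOD n] := by
  have hx : c x + n * a x = d x + n * b x := by simpa using DFunLike.congr_fun h x
  simpa [Nat.ModEq] using congrArg (· % n) hx

lemma nsmul_ne_single_one_add_nsmul (hn : n ≠ 1) (i : σ) (a b : σ →₀ ℕ) :
    n • a ≠ Finsupp.single i 1 + n • b := by
  intro h
  have h01 : 0 ≡ 1 [MOD n] := by
    simpa using modEq_of_add_nsmul_eq_add_nsmul ((zero_add (n • a)).trans h) i
  exact hn (Nat.dvd_one.mp (Nat.modEq_zero_iff_dvd.mp h01.symm))

lemma eq_of_single_one_add_nsmul_eq (hn : n ≠ 1) {i j : σ} {a b : σ →₀ ℕ}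
    (h : Finsupp.single i 1 + n • a = Finsupp.single j 1 + n • b) : i = j := by
  by_contra hij
  have h10 : 1 ≡ 0 [MOD n] := by
    simpa [Finsupp.single_eq_of_ne hij] using modEq_of_add_nsmul_eq_add_nsmul h i
  exact hn (Nat.dvd_one.mp (Nat.modEq_zero_iff_dvd.mp h10))

end Exponents

section Degree

variable {σ R : Type*} [CommSemiring R] (m : MonomialOrder σ)

lemma exists_mem_degree_sum_eq_degree {ι : Type*} {s : Finset ι} {p : ι → MvPolynomial σ R}
    (hp : ∃ i ∈ s, p i ≠ 0) (hinj : Set.InjOn (fun i ↦ m.degree (p i)) {i | i ∈ s ∧ p i ≠ 0}) :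
    ∃ i ∈ s, p i ≠ 0 ∧ m.degree (∑ j ∈ s, p j) = m.degree (p i) := by
  classical
  obtain ⟨i, hi, hmax⟩ := {i ∈ s | p i ≠ 0}.exists_max_image (fun i ↦ m.toSyn (m.degree (p i)))
    (by simpa [Finset.Nonempty] using hp)
  simp only [Finset.mem_filter] at hi hmax
  have hle : m.toSyn (m.degree (∑ j ∈ s, p j)) ≤ m.toSyn (m.degree (p i)) := by
    refine m.degree_sum_le.trans (Finset.sup_le fun j hj ↦ ?_)
    by_cases hpj : p j = 0
    · simp [hpj]
    · exact hmax j ⟨hj, hpj⟩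
  have hcoeff : ∀ j ∈ s, j ≠ i → (p j).coeff (m.degree (p i)) = 0 := by
    intro j hj hji
    by_cases hpj : p j = 0
    · simp [hpj]
    · exact m.coeff_eq_zero_of_lt <| (hmax j ⟨hj, hpj⟩).lt_of_ne fun h ↦
        hji (hinj ⟨hj, hpj⟩ hi (m.toSyn.injective h))
  have hmem : m.degree (p i) ∈ (∑ j ∈ s, p j).support := by
    rw [mem_support_iff, coeff_sum, Finset.sum_eq_single_of_mem i hi.1 hcoeff]
    exact m.coeff_degree_ne_zero_iff.mpr hi.2
  exact ⟨i, hi.1, hi.2, m.toSyn.injective (hle.antisymm (m.le_degree hmem))⟩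

lemma degree_X_mul_pow [NoZeroDivisors R] [Nontrivial R] (i : σ) {f : MvPolynomial σ R} {n : ℕ}
    (hf : f ^ n ≠ 0) : m.degree (X i * f ^ n) = Finsupp.single i 1 + n • m.degree f := by
  rw [m.degree_mul (X_ne_zero i) hf, m.degree_pow, m.degree_X]

end Degree

theorem stmt11_general {σ R : Type*} [CommSemiring R] [NoZeroDivisors R] {n : ℕ} (hn : n ≠ 1)
    {s : Finset σ} {f : σ → MvPolynomial σ R} {h : MvPolynomial σ R}
    (H : h ^ n = ∑ i ∈ s, X i * f i ^ n) : (∀ i ∈ s, f i = 0) ∧ h = 0 := by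
  nontriviality R
  obtain ⟨_, _⟩ := exists_wellFoundedGT σ
  let m : MonomialOrder σ := MonomialOrder.lex
  have hterms : ∀ i ∈ s, X i * f i ^ n = 0 := by
    by_contra! hne
    have hinj : Set.InjOn (fun i ↦ m.degree (X i * f i ^ n)) {i | i ∈ s ∧ X i * f i ^ n ≠ 0} := by
      rintro i ⟨-, hi⟩ j ⟨-, hj⟩ hij
      simp only [degree_X_mul_pow m i (right_ne_zero_of_mul hi),
        degree_X_mul_pow m j (right_ne_zero_of_mul hj)] at hij
      exact eq_of_single_one_add_nsmul_eq hn hij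
    obtain ⟨i, -, hi, hdeg⟩ := exists_mem_degree_sum_eq_degree m hne hinj
    rw [← H, m.degree_pow, degree_X_mul_pow m i (right_ne_zero_of_mul hi)] at hdeg
    exact nsmul_ne_single_one_add_nsmul hn i _ _ hdeg
  have hpow : h ^ n = 0 := H.trans (Finset.sum_eq_zero hterms)
  exact ⟨fun i hi ↦ eq_zero_of_pow_eq_zero ((mul_eq_zero_iff_left (X_ne_zero i)).mp (hterms i hi)),
    eq_zero_of_pow_eq_zero hpow⟩

theorem stmt11 (k : Type*) [Field k] (f g h : MvPolynomial (Fin 2) k)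
    (H : h ^ 3 = X 0 * f ^ 3 + X 1 * g ^ 3) :
    f = 0 ∧ g = 0 ∧ h = 0 := by
  simpa [and_assoc] using stmt11_general (n := 3) (s := .univ) (f := ![f, g]) (h := h)
    (by decide) (by simpa using H)
end

section
/- Let k be any field and let f, g, h be polynomials in k[a,b,c,d] satisfying h³ = a·f³ + b·f²·g + c·f·g² + d·g³. Then f = g = h = 0. Equivalently, the cubic curve w³ = a·u³ + b·u²v + c·uv² + d·v³ has no rational point over the rational function field k(a,b,c,d). -/
open MvPolynomial

/-!
Grade `R[x₀, …, xₙ]` by giving `x₀` weight `1`, `xₙ` weight `2` and the other variables weight `0`,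
and let `v` be the corresponding degree valuation on the field of fractions. If
`wⁿ = x₀ uⁿ + x₁ uⁿ⁻¹ t + ⋯ + xₙ tⁿ`, then the larger of `v (x₀ uⁿ)` and `v (xₙ tⁿ)` strictly
exceeds the valuations of the mixed terms. The degrees of `wⁿ`, `x₀ uⁿ` and `xₙ tⁿ` are `0`, `1`
and `2` modulo `n`, so for `3 ≤ n` those of these three terms that do not vanish have distinct
valuations, and nothing can cancel the largest one.
-/

section BinaryForm

variable {A B : Type*} [CommSemiring A] [CommSemiring B] {n : ℕ}

/-- The binary form `c₀ uⁿ + c₁ uⁿ⁻¹ t + ⋯ + cₙ tⁿ`, evaluated at `(u, t)`. The degree `n` is read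
off the index type of the coefficients. -/
def binaryForm (c : Fin (n + 1) → A) (u t : A) : A :=
  ∑ i, c i * u ^ (n - i : ℕ) * t ^ (i : ℕ)

theorem map_binaryForm (φ : A →+* B) (c : Fin (n + 1) → A) (u t : A) :
    φ (binaryForm c u t) = binaryForm (fun i ↦ φ (c i)) (φ u) (φ t) := by
  simp only [binaryForm, map_sum, map_mul, map_pow]

theorem binaryForm_zero_zero (hn : n ≠ 0) (c : Fin (n + 1) → A) : binaryForm c 0 0 = 0 := by
  refine Finset.sum_eq_zero fun i _ ↦ ?_
  rw [mul_assoc, ← pow_add, Nat.sub_add_cancel i.is_le, zero_pow hn, mul_zero]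

end BinaryForm

section PowerClasses

variable {G₀ : Type*} [CommGroupWithZero G₀] {x y α β : G₀} {n : ℕ}

theorem eq_mul_div_pow_of_mul_pow_eq_mul_pow (hx : x ≠ 0) (h : α * x ^ n = β * y ^ n) :
    α = β * (y / x) ^ n := by
  rw [div_pow, ← mul_div_assoc, ← h, mul_div_cancel_right₀ _ (pow_ne_zero n hx)]

theorem mul_pow_ne_mul_pow_of_forall_ne (hn : n ≠ 0) (hβ : β ≠ 0) (hαβ : ∀ γ : G₀, α ≠ β * γ ^ n)
    (hxy : x ≠ 0 ∨ y ≠ 0) : α * x ^ n ≠ β * y ^ n := by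
  intro h
  by_cases hx : x = 0
  · have hy : y ≠ 0 := hxy.resolve_left (not_not.mpr hx)
    rw [hx, zero_pow hn, mul_zero] at h
    exact mul_ne_zero hβ (pow_ne_zero n hy) h.symm
  · exact hαβ _ (eq_mul_div_pow_of_mul_pow_eq_mul_pow hx h)

end PowerClasses

section Valuation

variable {Γ₀ : Type*} [LinearOrderedCommGroupWithZero Γ₀] {x y α β μ : Γ₀} {n : ℕ}

theorem mul_pow_mul_pow_lt_max {i : ℕ} (hα : μ < α) (hβ : μ < β) (hi : i ≤ n)
    (hxy : x ≠ 0 ∨ y ≠ 0) : μ * x ^ (n - i) * y ^ i < max (α * x ^ n) (β * y ^ n) := by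
  have hpos : 0 < max x y := by simpa only [lt_max_iff, zero_lt_iff] using hxy
  calc μ * x ^ (n - i) * y ^ i
      ≤ μ * max x y ^ (n - i) * max x y ^ i := by gcongr <;> simp
    _ = μ * max x y ^ n := by rw [mul_assoc, ← pow_add, Nat.sub_add_cancel hi]
    _ < max (α * x ^ n) (β * y ^ n) := by
      rcases max_choice x y with h | h <;> rw [h] at hpos ⊢
      · exact lt_max_of_lt_left (mul_lt_mul_of_pos_right hα (pow_pos hpos n))
      · exact lt_max_of_lt_right (mul_lt_mul_of_pos_right hβ (pow_pos hpos n))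

variable {A : Type*} [CommRing A] (v : Valuation A Γ₀) {c : Fin (n + 1) → A} {u t w : A}

theorem valuation_binaryForm_eq_max
    (hmid : ∀ i, i ≠ 0 → i ≠ Fin.last n → v (c i) < v (c 0) ∧ v (c i) < v (c (Fin.last n)))
    (hne : v (c 0) * v u ^ n ≠ v (c (Fin.last n)) * v t ^ n) :
    v (binaryForm c u t) = max (v (c 0) * v u ^ n) (v (c (Fin.last n)) * v t ^ n) := by
  let T (i : Fin (n + 1)) : A := c i * u ^ (n - i : ℕ) * t ^ (i : ℕ)
  have hT_first : v (T 0) = v (c 0) * v u ^ n := by simp [T]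
  have hT_last : v (T (Fin.last n)) = v (c (Fin.last n)) * v t ^ n := by simp [T]
  have hT_mid (i) (hi₀ : i ≠ 0) (hi_last : i ≠ Fin.last n) :
      v (T i) < max (v (T 0)) (v (T (Fin.last n))) := by
    have hn : n ≠ 0 := by
      rintro rfl
      exact hi₀ (Fin.fin_one_eq_zero i)
    have hut : v u ≠ 0 ∨ v t ≠ 0 := by
      by_contra! h
      simp [h, hn] at hne
    simpa only [T, hT_first, hT_last, map_mul, map_pow] using
      mul_pow_mul_pow_lt_max (hmid i hi₀ hi_last).1 (hmid i hi₀ hi_last).2 i.is_le hut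
  rw [← hT_first, ← hT_last] at hne ⊢
  rcases hne.lt_or_gt with hlt | hlt
  · rw [max_eq_right hlt.le] at hT_mid ⊢
    refine v.map_sum_eq_of_lt (Finset.mem_univ (Fin.last n)) fun i hi ↦ ?_
    rcases eq_or_ne i 0 with rfl | hi₀
    · exact hlt
    · exact hT_mid i hi₀ (by simpa using hi)
  · rw [max_eq_left hlt.le] at hT_mid ⊢
    refine v.map_sum_eq_of_lt (Finset.mem_univ 0) fun i hi ↦ ?_
    rcases eq_or_ne i (Fin.last n) with rfl | hi_last
    · exact hlt
    · exact hT_mid i (by simpa using hi) hi_last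

theorem valuation_eq_zero_of_pow_eq_binaryForm (hn : n ≠ 0)
    (hmid : ∀ i, i ≠ 0 → i ≠ Fin.last n → v (c i) < v (c 0) ∧ v (c i) < v (c (Fin.last n)))
    (hfirst : ∀ γ : Γ₀, v (c 0) ≠ γ ^ n) (hlast : ∀ γ : Γ₀, v (c (Fin.last n)) ≠ γ ^ n)
    (hratio : ∀ γ : Γ₀, v (c (Fin.last n)) ≠ v (c 0) * γ ^ n)
    (h : w ^ n = binaryForm c u t) : v u = 0 ∧ v t = 0 := by
  by_contra hut
  have hc₀ : v (c 0) ≠ 0 := by simpa only [zero_pow hn] using hfirst 0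
  have hne : v (c 0) * v u ^ n ≠ v (c (Fin.last n)) * v t ^ n :=
    (mul_pow_ne_mul_pow_of_forall_ne hn hc₀ hratio (by tauto)).symm
  have hmax : 1 * v w ^ n = max (v (c 0) * v u ^ n) (v (c (Fin.last n)) * v t ^ n) := by
    rw [one_mul, ← map_pow, h, valuation_binaryForm_eq_max v hmid hne]
  have hw : v w ≠ 0 := by
    intro hw
    rw [hw, zero_pow hn, mul_zero] at hmax
    obtain ⟨h_first, h_last⟩ := max_le_iff.mp hmax.ge
    exact hne ((le_zero_iff.mp h_first).trans (le_zero_iff.mp h_last).symm)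
  have hne_first : v (c 0) * v u ^ n ≠ 1 * v w ^ n :=
    mul_pow_ne_mul_pow_of_forall_ne hn one_ne_zero (by simpa only [one_mul] using hfirst) (.inr hw)
  have hne_last : v (c (Fin.last n)) * v t ^ n ≠ 1 * v w ^ n :=
    mul_pow_ne_mul_pow_of_forall_ne hn one_ne_zero (by simpa only [one_mul] using hlast) (.inr hw)
  rcases max_choice (v (c 0) * v u ^ n) (v (c (Fin.last n)) * v t ^ n) with h_eq | h_eq
  · exact hne_first (hmax.trans h_eq).symm
  · exact hne_last (hmax.trans h_eq).symm

end Valuation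

section WeightedDegree

variable {σ R : Type*} [CommSemiring R] (w : σ → ℕ)

/-- The homomorphism multiplying each variable `X i` by the `w i`-th power of a new variable. The
degree of `weightedScaling w p` in the new variable is the weighted degree of `p`, which makes
results on degrees of univariate polynomials available for weighted degrees. -/
noncomputable def weightedScaling : MvPolynomial σ R →ₐ[R] Polynomial (MvPolynomial σ R) :=
  aeval fun i ↦ Polynomial.C (X i) * Polynomial.X ^ w i

theorem weightedScaling_X (i : σ) :
    weightedScaling w (X i : MvPolynomial σ R) = Polynomial.C (X i) * Polynomial.X ^ w i :=
  aeval_X _ i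

theorem eval_one_weightedScaling (p : MvPolynomial σ R) :
    (weightedScaling w p).eval 1 = p := by
  have hid : ((Polynomial.aeval (1 : MvPolynomial σ R)).restrictScalars R).comp
      (weightedScaling w) = AlgHom.id R (MvPolynomial σ R) :=
    MvPolynomial.algHom_ext fun i ↦ by simp [weightedScaling_X]
  simpa using DFunLike.congr_fun hid p

theorem weightedScaling_injective :
    Function.Injective (weightedScaling w : MvPolynomial σ R → Polynomial (MvPolynomial σ R)) :=
  Function.LeftInverse.injective (eval_one_weightedScaling w)

end WeightedDegree

section WeightedDegreeValuation

open WithZero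

theorem exists_valuation_X_eq_exp {σ R : Type*} [CommRing R] [IsDomain R] (w : σ → ℕ) (K : Type*)
    [Field K] [Algebra (MvPolynomial σ R) K] [IsFractionRing (MvPolynomial σ R) K] :
    ∃ v : Valuation K ℤᵐ⁰, ∀ i, v (algebraMap (MvPolynomial σ R) K (X i)) = exp (w i : ℤ) := by
  classical
  let φ : MvPolynomial σ R →+* RatFunc K := (algebraMap (Polynomial K) (RatFunc K)).comp
    ((Polynomial.mapRingHom (algebraMap (MvPolynomial σ R) K)).comp (weightedScaling w).toRingHom)
  have hφ : Function.Injective φ :=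
    (IsFractionRing.injective (Polynomial K) (RatFunc K)).comp <|
      (Polynomial.map_injective _ (IsFractionRing.injective _ K)).comp (weightedScaling_injective w)
  have hφX (i : σ) :
      φ (X i) = RatFunc.C (algebraMap (MvPolynomial σ R) K (X i)) * RatFunc.X ^ w i := by
    simp [φ, weightedScaling_X]
  refine ⟨(RatFunc.inftyValuation K).comap (IsFractionRing.lift hφ), fun i ↦ ?_⟩
  have hX : algebraMap (MvPolynomial σ R) K (X i) ≠ 0 := by simp
  rw [Valuation.comap_apply, IsFractionRing.lift_algebraMap, hφX, map_mul, map_pow,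
    RatFunc.inftyValuation.C K hX, RatFunc.inftyValuation.X, one_mul, ← exp_nsmul, nsmul_one]

theorem natCast_dvd_of_exp_eq_pow {m : ℤ} {n : ℕ} {γ : ℤᵐ⁰} (h : exp m = γ ^ n) : (n : ℤ) ∣ m :=
  ⟨log γ, by rw [← log_exp m, h, log_pow, nsmul_eq_mul]⟩

end WeightedDegreeValuation

section GenericBinaryForm

variable {R : Type*} [CommRing R] [IsDomain R] {n : ℕ}
  {K : Type*} [Field K] [Algebra (MvPolynomial (Fin (n + 1)) R) K]
  [IsFractionRing (MvPolynomial (Fin (n + 1)) R) K]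

open WithZero

theorem eq_zero_of_pow_eq_genericBinaryForm (hn : 3 ≤ n) {u v w : K}
    (h : w ^ n = binaryForm (fun i ↦ algebraMap (MvPolynomial (Fin (n + 1)) R) K (X i)) u v) :
    u = 0 ∧ v = 0 ∧ w = 0 := by
  have hn₀ : n ≠ 0 := by omega
  let weight (i : Fin (n + 1)) : ℕ := if i = 0 then 1 else if i = Fin.last n then 2 else 0
  let c (i : Fin (n + 1)) : K := algebraMap (MvPolynomial (Fin (n + 1)) R) K (X i)
  obtain ⟨val, hval : ∀ i, val (c i) = exp (weight i : ℤ)⟩ :=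
    exists_valuation_X_eq_exp (R := R) weight K
  have hfirst : val (c 0) = exp 1 := by simp [hval, weight]
  have hlast : val (c (Fin.last n)) = exp 2 := by simp [hval, weight, hn₀]
  have hmid (i) (hi₀ : i ≠ 0) (hi_last : i ≠ Fin.last n) :
      val (c i) = exp 0 := by simp [hval, weight, hi₀, hi_last]
  have hne_pow {m : ℤ} (hm : 0 < m) (hmn : m < n) (γ : ℤᵐ⁰) : exp m ≠ γ ^ n := fun hγ ↦
    hmn.not_ge (Int.le_of_dvd hm (natCast_dvd_of_exp_eq_pow hγ))
  obtain ⟨hu, hv⟩ : val u = 0 ∧ val v = 0 := by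
    refine valuation_eq_zero_of_pow_eq_binaryForm (c := c) val hn₀ (fun i hi₀ hi_last ↦ ?_)
      (fun γ ↦ ?_) (fun γ ↦ ?_) (fun γ hγ ↦ ?_) h
    · rw [hmid i hi₀ hi_last, hfirst, hlast, exp_lt_exp, exp_lt_exp]
      exact ⟨one_pos, two_pos⟩
    · exact hfirst ▸ hne_pow one_pos (by omega) γ
    · exact hlast ▸ hne_pow two_pos (by omega) γ
    · rw [hfirst, hlast, ← one_add_one_eq_two, exp_add] at hγ
      exact hne_pow one_pos (by omega) γ (mul_left_cancel₀ exp_ne_zero hγ)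
  rw [map_eq_zero] at hu hv
  subst hu hv
  rw [binaryForm_zero_zero hn₀] at h
  exact ⟨rfl, rfl, eq_zero_of_pow_eq_zero h⟩

end GenericBinaryForm

theorem stmt13_general {R : Type*} [CommRing R] [IsDomain R] {n : ℕ} (hn : 3 ≤ n) (K : Type*)
    [Field K] [Algebra (MvPolynomial (Fin (n + 1)) R) K]
    [IsFractionRing (MvPolynomial (Fin (n + 1)) R) K] :
    (∀ f g h : MvPolynomial (Fin (n + 1)) R,
        h ^ n = binaryForm X f g → f = 0 ∧ g = 0 ∧ h = 0) ∧
      ∀ u v w : K,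
        w ^ n = binaryForm (fun i ↦ algebraMap (MvPolynomial (Fin (n + 1)) R) K (X i)) u v →
          u = 0 ∧ v = 0 ∧ w = 0 := by
  refine ⟨fun f g h e ↦ ?_, fun _ _ _ ↦ eq_zero_of_pow_eq_genericBinaryForm hn⟩
  have eK := congrArg (algebraMap _ K) e
  rw [map_pow, map_binaryForm] at eK
  simpa using eq_zero_of_pow_eq_genericBinaryForm hn eK

theorem stmt13 (k : Type*) [Field k] :
    (∀ f g h : MvPolynomial (Fin 4) k,
        h ^ 3 = X 0 * f ^ 3 + X 1 * f ^ 2 * g + X 2 * f * g ^ 2 + X 3 * g ^ 3 →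
          f = 0 ∧ g = 0 ∧ h = 0) ∧
      ∀ u v w : FractionRing (MvPolynomial (Fin 4) k),
        w ^ 3 =
            algebraMap (MvPolynomial (Fin 4) k) _ (X 0) * u ^ 3 +
              algebraMap (MvPolynomial (Fin 4) k) _ (X 1) * u ^ 2 * v +
              algebraMap (MvPolynomial (Fin 4) k) _ (X 2) * u * v ^ 2 +
              algebraMap (MvPolynomial (Fin 4) k) _ (X 3) * v ^ 3 →
          u = 0 ∧ v = 0 ∧ w = 0 := by
  simpa [binaryForm, Fin.sum_univ_four] using
    stmt13_general (R := k) le_rfl (FractionRing (MvPolynomial (Fin 4) k))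
end

section
/- In the binary cubic generic Clifford algebra A, the element ε = xyx + ω·x²y + ω²·yx² satisfies εx = ω·xε and εy = ω·yε + (1−ω)·γ, and ε³ is central in A. -/
/-- ε = xyx + ω·x²y + ω²·yx². -/
noncomputable def gε (k : Type*) [Field k] (ω : k) : GCA k :=
  gx k * gy k * gx k + algebraMap k (GCA k) ω * (gx k ^ 2 * gy k) +
    algebraMap k (GCA k) (ω ^ 2) * (gy k * gx k ^ 2)

/-! The element `γ` is symmetric in `x` and `y` and commutes with both, hence with `ε`. Therefore
`εy = ωyε + (1 - ω)γ` can be rewritten as `εy - γ = ω(yε - γ)`, so that passing `εⁿ` across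
`yε - γ` only produces the scalar `ωⁿ`, which is `1` for `n = 3`; the same holds for `εx = ωxε`,
with `0` in place of `γ`. -/

theorem pow_mul_eq_smul_mul_pow {M A : Type*} [Monoid M] [Monoid A] [MulAction M A]
    [IsScalarTower M A A] [SMulCommClass M A A] {q : M} {e z : A} (h : e * z = q • (z * e))
    (n : ℕ) : e ^ n * z = q ^ n • (z * e ^ n) := by
  induction n with
  | zero => simp
  | succ n ih =>
    calc e ^ (n + 1) * z = q • (e ^ n * z * e) := by
          rw [pow_succ, mul_assoc, h, mul_smul_comm, mul_assoc]
      _ = q ^ (n + 1) • (z * e ^ (n + 1)) := by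
          rw [ih, smul_mul_assoc, smul_smul, mul_assoc, ← pow_succ, ← pow_succ']

theorem commute_pow_of_mul_eq_smul_add {R A : Type*} [Ring R] [Ring A] [Module R A]
    [IsScalarTower R A A] [SMulCommClass R A A] {q : R} {e y g : A} (hge : Commute g e)
    (h : e * y = q • (y * e) + (1 - q) • g) {n : ℕ} (hq : q ^ n = 1) : Commute (e ^ n) y := by
  cases n with
  | zero => simp
  | succ n =>
    have factor : e * y - g = q • (y * e - g) := by
      rw [h, smul_sub, sub_smul, one_smul]; abel
    have skew : e * (y * e - g) = q • ((y * e - g) * e) := by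
      rw [← smul_mul_assoc, ← factor, sub_mul, mul_sub, hge.eq, mul_assoc]
    have shifted : e ^ (n + 1) * y - e ^ n * g = y * e ^ (n + 1) - e ^ n * g :=
      calc e ^ (n + 1) * y - e ^ n * g = q • (e ^ n * (y * e - g)) := by
            rw [← mul_smul_comm, ← factor, mul_sub, pow_succ, mul_assoc]
        _ = (y * e - g) * e ^ n := by
            rw [pow_mul_eq_smul_mul_pow skew, smul_smul, ← pow_succ', hq, one_smul]
        _ = y * e ^ (n + 1) - e ^ n * g := by
            rw [sub_mul, mul_assoc, ← pow_succ', (hge.pow_right n).eq]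
    exact sub_left_injective shifted

theorem mem_center_of_adjoin_eq_top {R A : Type*} [CommSemiring R] [Semiring A] [Algebra R A]
    {s : Set A} (hs : Algebra.adjoin R s = ⊤) {c : A} (hc : ∀ a ∈ s, Commute c a) :
    c ∈ Set.center A :=
  Semigroup.mem_center_iff.2 fun _ =>
    (Algebra.commute_of_mem_adjoin_of_forall_mem_commute (hs ▸ Algebra.mem_top) hc).eq.symm

/-- A pair of elements satisfying the defining relations of the binary cubic generic Clifford
algebra. The relations `x³y = yx³` and `xy³ = y³x` are stated through `Commute`. -/
structure IsCubicCliffordPair {A : Type*} [Semiring A] (x y : A) : Prop where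
  commute_pow_left : Commute (x ^ 3) y
  commute_pow_right : Commute x (y ^ 3)
  sq_mul_sq_add : x ^ 2 * y ^ 2 + (x * y) ^ 2 = y ^ 2 * x ^ 2 + (y * x) ^ 2

theorem IsCubicCliffordPair.symm {A : Type*} [Semiring A] {x y : A}
    (h : IsCubicCliffordPair x y) : IsCubicCliffordPair y x where
  commute_pow_left := h.commute_pow_right.symm
  commute_pow_right := h.commute_pow_left.symm
  sq_mul_sq_add := h.sq_mul_sq_add.symm

/-- The element `γ = (xy)² - y²x²` attached to two elements of a ring; for a cubic Clifford pair
it is the correction term in the commutation rule of `ε` and `y`. -/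
def cliffordGamma {A : Type*} [Ring A] (x y : A) : A :=
  (x * y) ^ 2 - y ^ 2 * x ^ 2

/-- The element `ε = xyx + ω·x²y + ω²·yx²` attached to two elements of an algebra and a scalar
`ω`, which is meant to be a cube root of unity. -/
def cliffordEpsilon {R A : Type*} [CommSemiring R] [Semiring A] [Algebra R A] (ω : R) (x y : A) :
    A :=
  x * y * x + ω • (x ^ 2 * y) + ω ^ 2 • (y * x ^ 2)

section Gamma

variable {A : Type*} [Ring A] {x y : A}

theorem cliffordGamma_comm
    (h : x ^ 2 * y ^ 2 + (x * y) ^ 2 = y ^ 2 * x ^ 2 + (y * x) ^ 2) :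
    cliffordGamma x y = cliffordGamma y x := by
  rw [cliffordGamma, cliffordGamma, sub_eq_sub_iff_add_eq_add, add_comm, h, add_comm]

theorem IsCubicCliffordPair.commute_cliffordGamma_left (h : IsCubicCliffordPair x y) :
    Commute (cliffordGamma x y) x :=
  calc cliffordGamma x y * x
      = x * y * x * y * x - y * (y * x ^ 3) := by rw [cliffordGamma]; noncomm_ring
    _ = x * y * x * y * x - x ^ 3 * y * y := by
        rw [← h.commute_pow_left.eq, ← mul_assoc, ← h.commute_pow_left.eq]
    _ = x * cliffordGamma y x := by rw [cliffordGamma]; noncomm_ring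
    _ = x * cliffordGamma x y := by rw [cliffordGamma_comm h.sq_mul_sq_add]

theorem IsCubicCliffordPair.commute_cliffordGamma_right (h : IsCubicCliffordPair x y) :
    Commute (cliffordGamma x y) y :=
  cliffordGamma_comm h.sq_mul_sq_add ▸ h.symm.commute_cliffordGamma_left

end Gamma

section EpsilonSemiring

variable {R A : Type*} [CommSemiring R] [Semiring A] [Algebra R A] {ω : R} {x y : A}

theorem commute_cliffordEpsilon_right {z : A} (hx : Commute z x) (hy : Commute z y) :
    Commute z (cliffordEpsilon ω x y) :=
  (((hx.mul_right hy).mul_right hx).add_right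
    (((hx.pow_right 2).mul_right hy).smul_right ω)).add_right
    ((hy.mul_right (hx.pow_right 2)).smul_right (ω ^ 2))

theorem cliffordEpsilon_mul_left (hω : ω ^ 3 = 1) (h : Commute (x ^ 3) y) :
    cliffordEpsilon ω x y * x = ω • (x * cliffordEpsilon ω x y) :=
  calc cliffordEpsilon ω x y * x
      = (1 : R) • (x * y * x ^ 2) + ω • (x ^ 2 * y * x) + ω ^ 2 • (y * x ^ 3) := by
        simp only [cliffordEpsilon, add_mul, smul_mul_assoc, one_smul, mul_assoc, pow_succ x,
          pow_zero, one_mul]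
    _ = ω ^ 3 • (x * y * x ^ 2) + ω • (x ^ 2 * y * x) + ω ^ 2 • (x ^ 3 * y) := by
        rw [hω, h.eq]
    _ = ω • (x * cliffordEpsilon ω x y) := by
        simp only [cliffordEpsilon, mul_add, mul_smul_comm, mul_assoc, pow_succ x, pow_zero,
          one_mul]
        module

end EpsilonSemiring

section EpsilonRing

variable {R A : Type*} [CommRing R] [Ring A] [Algebra R A] {ω : R} {x y : A}

theorem cliffordEpsilon_mul_right (hω : ω ^ 3 = 1)
    (h : x ^ 2 * y ^ 2 + (x * y) ^ 2 = y ^ 2 * x ^ 2 + (y * x) ^ 2) :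
    cliffordEpsilon ω x y * y =
      ω • (y * cliffordEpsilon ω x y) + (1 - ω) • cliffordGamma x y := by
  have left : cliffordEpsilon ω x y * y =
      (x * y) ^ 2 + ω • (x ^ 2 * y ^ 2) + ω ^ 2 • (y * x ^ 2 * y) := by
    simp only [cliffordEpsilon, add_mul, smul_mul_assoc, sq x, sq y, sq (x * y), mul_assoc]
  have right : ω • (y * cliffordEpsilon ω x y) =
      ω • (y * x) ^ 2 + ω ^ 2 • (y * x ^ 2 * y) + ω ^ 3 • (y ^ 2 * x ^ 2) := by
    simp only [cliffordEpsilon, mul_add, mul_smul_comm, sq x, sq y, sq (y * x), mul_assoc]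
    module
  have gamma : (1 - ω) • cliffordGamma x y =
      (x * y) ^ 2 - y ^ 2 * x ^ 2 - ω • ((y * x) ^ 2 - x ^ 2 * y ^ 2) :=
    calc (1 - ω) • cliffordGamma x y = cliffordGamma x y - ω • cliffordGamma y x := by
          rw [sub_smul, one_smul, ← cliffordGamma_comm h]
      _ = _ := rfl
  rw [left, right, gamma, hω]
  module

namespace IsCubicCliffordPair

theorem commute_cliffordEpsilon_pow_left (h : IsCubicCliffordPair x y) (hω : ω ^ 3 = 1) :
    Commute (cliffordEpsilon ω x y ^ 3) x :=
  commute_pow_of_mul_eq_smul_add (Commute.zero_left _)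
    (by rw [smul_zero, add_zero, cliffordEpsilon_mul_left hω h.commute_pow_left]) hω

theorem commute_cliffordEpsilon_pow_right (h : IsCubicCliffordPair x y) (hω : ω ^ 3 = 1) :
    Commute (cliffordEpsilon ω x y ^ 3) y :=
  commute_pow_of_mul_eq_smul_add
    (commute_cliffordEpsilon_right h.commute_cliffordGamma_left h.commute_cliffordGamma_right)
    (cliffordEpsilon_mul_right hω h.sq_mul_sq_add) hω

end IsCubicCliffordPair

end EpsilonRing

theorem isCubicCliffordPair_gx_gy (k : Type*) [Field k] : IsCubicCliffordPair (gx k) (gy k) where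
  commute_pow_left := by
    simpa only [map_mul, map_pow] using! RingQuot.mkAlgHom_rel k (GCRel.rel1 (k := k))
  commute_pow_right := by
    simpa only [map_mul, map_pow] using! RingQuot.mkAlgHom_rel k (GCRel.rel2 (k := k))
  sq_mul_sq_add := by
    simpa only [map_mul, map_add, map_pow] using! RingQuot.mkAlgHom_rel k (GCRel.rel3 (k := k))

theorem adjoin_gx_gy (k : Type*) [Field k] : Algebra.adjoin k {gx k, gy k} = ⊤ := by
  have image_generators :
      RingQuot.mkAlgHom k (GCRel k) '' Set.range (FreeAlgebra.ι k) = {gx k, gy k} := by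
    rw [← Set.range_comp]
    ext a
    simp [Fin.exists_fin_two, gx, gy, eq_comm]
  rw [← image_generators, Algebra.adjoin_image, FreeAlgebra.adjoin_range_ι, Algebra.map_top,
    AlgHom.range_eq_top]
  exact RingQuot.mkAlgHom_surjective k (GCRel k)

theorem gγ_eq_cliffordGamma (k : Type*) [Field k] : gγ k = cliffordGamma (gx k) (gy k) := rfl

theorem gε_eq_cliffordEpsilon (k : Type*) [Field k] (ω : k) :
    gε k ω = cliffordEpsilon ω (gx k) (gy k) := by
  simp only [gε, cliffordEpsilon, Algebra.smul_def]

theorem stmt14_general {R A : Type*} [CommRing R] [Ring A] [Algebra R A] {x y : A}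
    (h : IsCubicCliffordPair x y) (hgen : Algebra.adjoin R {x, y} = ⊤) {ω : R} (hω : ω ^ 3 = 1) :
    cliffordEpsilon ω x y * x = ω • (x * cliffordEpsilon ω x y) ∧
      cliffordEpsilon ω x y * y =
        ω • (y * cliffordEpsilon ω x y) + (1 - ω) • cliffordGamma x y ∧
      cliffordEpsilon ω x y ^ 3 ∈ Set.center A := by
  refine ⟨cliffordEpsilon_mul_left hω h.commute_pow_left,
    cliffordEpsilon_mul_right hω h.sq_mul_sq_add, mem_center_of_adjoin_eq_top hgen ?_⟩
  rintro a (rfl | rfl)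
  exacts [h.commute_cliffordEpsilon_pow_left hω, h.commute_cliffordEpsilon_pow_right hω]

theorem stmt14 (k : Type*) [Field k] (h2 : (2 : k) ≠ 0) (h3 : (3 : k) ≠ 0)
    (ω : k) (hω : IsPrimitiveRoot ω 3) :
    gε k ω * gx k = algebraMap k (GCA k) ω * (gx k * gε k ω) ∧
      gε k ω * gy k = algebraMap k (GCA k) ω * (gy k * gε k ω) +
        algebraMap k (GCA k) (1 - ω) * gγ k ∧
      gε k ω ^ 3 ∈ Set.center (GCA k) := by
  simpa only [gγ_eq_cliffordGamma, gε_eq_cliffordEpsilon, Algebra.smul_def] using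
    stmt14_general (isCubicCliffordPair_gx_gy k) (adjoin_gx_gy k) hω.pow_eq_one
end
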